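/- arXiv:1603.01891 — 3 statements merged into one kernel-verified Lean document; each statement's English description precedes it below -/
import Mathlib

section
/- Let ψ be a positive, continuous, convex (downwards), differentiable function on [1,∞) with lim_{t→∞} ψ(t) = 0 and Σ_{j=1}^∞ ψ(j) < ∞. Then for every t∈[−π,π] and every n∈ℕ, one has 0 < Σ_{k=1}^∞ Σ_{j=n}^∞ ψ(j) ∫_0^∞ ψ(j+u) ( cos((t−2πk)u) + cos((t+2πk)u) ) du ≤ (π/4 − 1/π) · ψ(n) · ( |ψ'(n)| + ψ(n) ). -/
open MeasureTheory Real Filter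
open Set Topology

/-!
For a positive, convex, differentiable `f` vanishing at infinity, `f'` is monotone and, having the
Darboux property, continuous. So `df'` is an atomless measure of mass `-f' 0` on `(0, ∞)`, and
integration by parts followed by Fubini gives

  `∫₀^∞ f(u) cos(a u) du = a⁻² ∫₀^∞ (1 - cos(a v)) df'(v) ∈ (0, 2 |f' 0| / a²]`.

Apply this to `u ↦ ψ(j + u)` with `a = t ± 2πk`. The sum of the two values of `1 / a²` is largest at
`|t| = π`, where summing over `k` produces the odd squares, and `Σ_{j ≥ n} |ψ'(j)| ≤ |ψ'(n)| + ψ(n)`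
because `|ψ'(j + 1)| ≤ ψ(j) - ψ(j + 1)` telescopes. The resulting constant `1/2 - 2/π²` is smaller
than `π/4 - 1/π`.
-/

theorem continuous_of_monotone_of_ordConnected_range {α β : Type*} [LinearOrder α]
    [TopologicalSpace α] [OrderTopology α] [LinearOrder β] [TopologicalSpace β] [OrderTopology β]
    [DenselyOrdered β] {g : α → β} (hg : Monotone g) (hrange : (range g).OrdConnected) :
    Continuous g := by
  have hmono : Monotone (rangeFactorization g) := fun _ _ hxy => hg hxy
  exact continuous_subtype_val.comp (hmono.continuous_of_surjective rangeFactorization_surjective)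

theorem integrableOn_Ioi_comp_const_add_iff {E : Type*} [NormedAddCommGroup E] {f : ℝ → E} {x : ℝ} :
    IntegrableOn (fun u => f (x + u)) (Ioi 0) ↔ IntegrableOn f (Ioi x) := by
  have h := (measurePreserving_add_left volume x).integrableOn_comp_preimage
    (measurableEmbedding_addLeft x) (f := f) (s := Ioi x)
  rwa [preimage_const_add_Ioi, sub_self] at h

theorem integrableOn_mul_cos {f : ℝ → ℝ} {s : Set ℝ} (hf : IntegrableOn f s) (a : ℝ) :
    IntegrableOn (fun u => f u * cos (a * u)) s :=
  Integrable.mul_bdd (c := 1) hf (by fun_prop) (ae_of_all _ fun _ => abs_cos_le_one _)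

theorem integrableOn_mul_sin {f : ℝ → ℝ} {s : Set ℝ} (hf : IntegrableOn f s) (a : ℝ) :
    IntegrableOn (fun u => f u * sin (a * u)) s :=
  Integrable.mul_bdd (c := 1) hf (by fun_prop) (ae_of_all _ fun _ => abs_sin_le_one _)

theorem integral_sin_mul {a : ℝ} (ha : a ≠ 0) (v : ℝ) :
    ∫ u in (0 : ℝ)..v, sin (a * u) = (1 - cos (a * v)) / a := by
  rw [intervalIntegral.integral_comp_mul_left _ ha, integral_sin, mul_zero, cos_zero,
    smul_eq_mul, div_eq_inv_mul]

section Measure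

variable (μ : Measure ℝ) [IsFiniteMeasure μ]

theorem integral_measureReal_Ioi_mul {φ : ℝ → ℝ} (hφ : Measurable φ) {c : ℝ}
    (hint : IntegrableOn (fun u => μ.real (Ioi u) * φ u) (Ioi c)) :
    ∫ u in Ioi c, μ.real (Ioi u) * φ u = ∫ v in Ioi c, (∫ u in c..v, φ u) ∂μ := by
  let K : ℝ → ℝ → ℝ := fun u v => (Ioi u).indicator (fun _ => φ u) v
  have hK_left {u : ℝ} (hu : u ∈ Ioi c) (x : ℝ) :
      ∫ v in Ioi c, (Ioi u).indicator (fun _ => x) v ∂μ = μ.real (Ioi u) * x := by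
    rw [setIntegral_indicator measurableSet_Ioi, Ioi_inter_Ioi, max_eq_right (le_of_lt hu),
      setIntegral_const, smul_eq_mul]
  have hK_right {v : ℝ} (hv : v ∈ Ioi c) : ∫ u in Ioi c, K u v = ∫ u in c..v, φ u := by
    have hKv : (fun u => K u v) = (Iio v).indicator φ := rfl
    rw [hKv, setIntegral_indicator measurableSet_Iio, Ioi_inter_Iio,
      intervalIntegral.integral_of_le (le_of_lt hv), integral_Ioc_eq_integral_Ioo]
  have hK_meas : Measurable (Function.uncurry K) :=
    (hφ.comp measurable_fst).indicator (measurableSet_lt measurable_fst measurable_snd)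
  have hK_int : Integrable (Function.uncurry K)
      ((volume.restrict (Ioi c)).prod (μ.restrict (Ioi c))) := by
    refine (integrable_prod_iff hK_meas.aestronglyMeasurable).2 ⟨ae_of_all _ fun u =>
      (integrable_const (φ u)).indicator measurableSet_Ioi, ?_⟩
    refine IntegrableOn.congr_fun hint.norm (fun u hu => ?_) measurableSet_Ioi
    simp only [Function.uncurry, K, norm_indicator_eq_indicator_norm]
    rw [hK_left hu, norm_mul, norm_of_nonneg measureReal_nonneg]
  calc ∫ u in Ioi c, μ.real (Ioi u) * φ u
      = ∫ u in Ioi c, ∫ v in Ioi c, K u v ∂μ :=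
        setIntegral_congr_fun measurableSet_Ioi fun u hu => (hK_left hu (φ u)).symm
    _ = ∫ v in Ioi c, (∫ u in Ioi c, K u v) ∂μ := integral_integral_swap hK_int
    _ = ∫ v in Ioi c, (∫ u in c..v, φ u) ∂μ :=
        setIntegral_congr_fun measurableSet_Ioi fun v hv => hK_right hv

theorem integrable_one_sub_cos_mul (a : ℝ) : Integrable (fun v => 1 - cos (a * v)) μ :=
  (integrable_const 1).sub <| (integrable_const (1 : ℝ)).mono' (by fun_prop)
    (ae_of_all _ fun _ => abs_cos_le_one _)

theorem integral_one_sub_cos_mul_le (a : ℝ) : ∫ v, (1 - cos (a * v)) ∂μ ≤ 2 * μ.real univ := by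
  calc ∫ v, (1 - cos (a * v)) ∂μ
      ≤ ∫ _, (2 : ℝ) ∂μ := integral_mono (integrable_one_sub_cos_mul μ a) (integrable_const 2)
        fun v => by linarith [neg_one_le_cos (a * v)]
    _ = 2 * μ.real univ := by rw [integral_const, smul_eq_mul, mul_comm]

theorem countable_setOf_cos_mul_eq_one {a : ℝ} (ha : a ≠ 0) : {v | cos (a * v) = 1}.Countable := by
  refine (countable_range fun m : ℤ => m * (2 * π) / a).mono fun v hv => ?_
  obtain ⟨m, hm⟩ := (cos_eq_one_iff _).1 hv
  exact ⟨m, by simp only [hm, mul_div_cancel_left₀ v ha]⟩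

theorem integral_one_sub_cos_mul_pos [NullSingletonClass μ] [NeZero μ] {a : ℝ} (ha : a ≠ 0) :
    0 < ∫ v, (1 - cos (a * v)) ∂μ := by
  have hzero : (Function.support fun v => 1 - cos (a * v))ᶜ = {v | cos (a * v) = 1} := by
    ext v
    rw [mem_compl_iff, Function.mem_support, not_not, sub_eq_zero, eq_comm, mem_ofPred_eq]
  have hnull : μ (Function.support fun v => 1 - cos (a * v))ᶜ = 0 :=
    hzero ▸ (countable_setOf_cos_mul_eq_one ha).measure_zero μ
  rw [integral_pos_iff_support_of_nonneg (fun v => sub_nonneg.2 (cos_le_one _))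
    (integrable_one_sub_cos_mul μ a), measure_of_measure_compl_eq_zero hnull]
  exact Measure.measure_univ_pos.2 (NeZero.ne μ)

end Measure

/-- The differentiable members of the class `𝔐`, with `[1, ∞)` replaced by `[c, ∞)` to allow
restriction and translation; `f'` is the derivative of `f` on `[c, ∞)`, two-sided at `c`. -/
structure IsConvexVanishing (f f' : ℝ → ℝ) (c : ℝ) : Prop where
  pos : ∀ x, c ≤ x → 0 < f x
  convexOn : ConvexOn ℝ (Ici c) f
  hasDerivAt : ∀ x, c ≤ x → HasDerivAt f (f' x) x
  tendsto_zero : Tendsto f atTop (𝓝 0)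

namespace IsConvexVanishing

variable {f f' : ℝ → ℝ} {c x : ℝ}

theorem mono (hf : IsConvexVanishing f f' c) (hx : c ≤ x) : IsConvexVanishing f f' x where
  pos y hy := hf.pos y (hx.trans hy)
  convexOn := hf.convexOn.subset (Ici_subset_Ici.2 hx) (convex_Ici x)
  hasDerivAt y hy := hf.hasDerivAt y (hx.trans hy)
  tendsto_zero := hf.tendsto_zero

theorem comp_const_add (hf : IsConvexVanishing f f' c) :
    IsConvexVanishing (fun u => f (c + u)) (fun u => f' (c + u)) 0 where
  pos _ hu := hf.pos _ (le_add_of_nonneg_right hu)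
  convexOn := (hf.convexOn.translate_right c).subset
    (fun _ hu => le_add_of_nonneg_right (mem_Ici.1 hu)) (convex_Ici 0)
  hasDerivAt u hu := (hf.hasDerivAt _ (le_add_of_nonneg_right hu)).comp_const_add c u
  tendsto_zero := hf.tendsto_zero.comp (tendsto_atTop_add_const_left _ c tendsto_id)

theorem continuousOn (hf : IsConvexVanishing f f' c) : ContinuousOn f (Ici c) :=
  fun x hx => (hf.hasDerivAt x hx).continuousAt.continuousWithinAt

theorem monotoneOn_deriv (hf : IsConvexVanishing f f' c) : MonotoneOn f' (Ici c) :=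
  (hf.convexOn.monotoneOn_deriv fun x hx => (hf.hasDerivAt x hx).differentiableAt).congr
    fun x hx => (hf.hasDerivAt x hx).deriv

theorem deriv_neg (hf : IsConvexVanishing f f' c) (hx : c ≤ x) : f' x < 0 := by
  by_contra! h0
  refine (hf.pos x hx).not_ge (ge_of_tendsto hf.tendsto_zero ?_)
  filter_upwards [eventually_gt_atTop x] with y hy
  have hslope : 0 ≤ slope f x y := h0.trans <|
    hf.convexOn.le_slope_of_hasDerivAt hx (hx.trans hy.le) hy (hf.hasDerivAt x hx)
  rwa [slope_nonneg_iff_of_le hy.le] at hslope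

theorem antitoneOn (hf : IsConvexVanishing f f' c) : AntitoneOn f (Ici c) := by
  have hle {x : ℝ} (hx : x ∈ interior (Ici c)) : c ≤ x := interior_subset hx
  exact antitoneOn_of_hasDerivWithinAt_nonpos (convex_Ici c) hf.continuousOn
    (fun x hx => (hf.hasDerivAt x (hle hx)).hasDerivWithinAt) fun x hx => (hf.deriv_neg (hle hx)).le

theorem neg_deriv_add_one_le (hf : IsConvexVanishing f f' c) (hx : c ≤ x) :
    -f' (x + 1) ≤ f x - f (x + 1) := by
  have hx1 : c ≤ x + 1 := hx.trans (lt_add_one x).le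
  have h := hf.convexOn.slope_le_of_hasDerivAt hx hx1 (lt_add_one x) (hf.hasDerivAt _ hx1)
  rw [slope_def_field, add_sub_cancel_left, div_one] at h
  linarith

theorem tendsto_deriv_zero (hf : IsConvexVanishing f f' c) : Tendsto f' atTop (𝓝 0) := by
  have hdiff : Tendsto (fun x => f x - f (x - 1)) atTop (𝓝 0) := by
    have hprev : Tendsto (fun x => f (x - 1)) atTop (𝓝 0) :=
      hf.tendsto_zero.comp (tendsto_atTop_add_const_right _ (-1) tendsto_id)
    simpa only [sub_zero] using hf.tendsto_zero.sub hprev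
  refine tendsto_of_tendsto_of_tendsto_of_le_of_le' hdiff tendsto_const_nhds ?_ ?_ <;>
    filter_upwards [eventually_ge_atTop (c + 1)] with x hx
  · have h := hf.neg_deriv_add_one_le (le_sub_iff_add_le.2 hx)
    rw [sub_add_cancel] at h
    linarith
  · exact (hf.deriv_neg (by linarith)).le

theorem monotone_iciExtend_deriv (hf : IsConvexVanishing f f' c) :
    Monotone (IciExtend fun x : Ici c => f' x) :=
  Monotone.IciExtend fun x y hxy => hf.monotoneOn_deriv x.2 y.2 hxy

theorem continuous_iciExtend_deriv (hf : IsConvexVanishing f f' c) :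
    Continuous (IciExtend fun x : Ici c => f' x) := by
  refine continuous_of_monotone_of_ordConnected_range hf.monotone_iciExtend_deriv ?_
  rw [range_IciExtend, ← image_eq_range]
  exact ordConnected_Ici.image_hasDerivWithinAt fun x hx => (hf.hasDerivAt x hx).hasDerivWithinAt

/-- The Stieltjes function `f'`, extended to the left of `c` by the constant `f' c`. Its measure is
`f''(v) dv` on `(c, ∞)` when `f` is twice differentiable. -/
noncomputable def derivStieltjes (hf : IsConvexVanishing f f' c) : StieltjesFunction ℝ where
  toFun := IciExtend fun x : Ici c => f' x
  mono' := hf.monotone_iciExtend_deriv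
  right_continuous' _ := hf.continuous_iciExtend_deriv.continuousWithinAt

theorem derivStieltjes_apply (hf : IsConvexVanishing f f' c) (hx : c ≤ x) :
    hf.derivStieltjes x = f' x :=
  IciExtend_of_mem (fun x : Ici c => f' x) hx

theorem tendsto_derivStieltjes_atTop (hf : IsConvexVanishing f f' c) :
    Tendsto hf.derivStieltjes atTop (𝓝 0) :=
  hf.tendsto_deriv_zero.congr' <|
    (eventually_ge_atTop c).mono fun _ hx => (hf.derivStieltjes_apply hx).symm

theorem tendsto_derivStieltjes_atBot (hf : IsConvexVanishing f f' c) :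
    Tendsto hf.derivStieltjes atBot (𝓝 (f' c)) :=
  tendsto_const_nhds.congr' <|
    (eventually_le_atBot c).mono fun _ hx => (IciExtend_of_le (fun x : Ici c => f' x) hx).symm

instance (hf : IsConvexVanishing f f' c) : IsFiniteMeasure hf.derivStieltjes.measure :=
  hf.derivStieltjes.isFiniteMeasure hf.tendsto_derivStieltjes_atBot hf.tendsto_derivStieltjes_atTop

instance (hf : IsConvexVanishing f f' c) : NullSingletonClass hf.derivStieltjes.measure where
  measure_singleton x := by
    have hcont : Continuous hf.derivStieltjes := hf.continuous_iciExtend_deriv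
    rw [StieltjesFunction.measure_singleton, hcont.continuousWithinAt.leftLim_eq, sub_self,
      ENNReal.ofReal_zero]

theorem derivStieltjes_measureReal_Ioi (hf : IsConvexVanishing f f' c) (hx : c ≤ x) :
    hf.derivStieltjes.measure.real (Ioi x) = -f' x := by
  rw [measureReal_def, hf.derivStieltjes.measure_Ioi hf.tendsto_derivStieltjes_atTop,
    hf.derivStieltjes_apply hx, zero_sub, ENNReal.toReal_ofReal (neg_nonneg.2 (hf.deriv_neg hx).le)]

theorem integrableOn_deriv (hf : IsConvexVanishing f f' c) : IntegrableOn f' (Ioi c) :=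
  integrableOn_Ioi_deriv_of_nonpos' hf.hasDerivAt
    (fun _ hx => (hf.deriv_neg (le_of_lt hx)).le) hf.tendsto_zero

theorem integrableOn_of_summable (hf : IsConvexVanishing f f' c)
    (hsum : Summable fun j : ℕ => f (j + c)) : IntegrableOn f (Ioi c) := by
  refine integrableOn_Ioi_comp_const_add_iff.1 <|
    hf.comp_const_add.antitoneOn.integrableOn_Ioi_zero_of_summable ?_
      fun u hu => (hf.comp_const_add.pos u (le_of_lt hu)).le
  simpa only [add_comm c] using hsum

theorem integral_mul_cos (hf : IsConvexVanishing f f' 0) (hint : IntegrableOn f (Ioi 0)) {a : ℝ}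
    (ha : a ≠ 0) :
    ∫ u in Ioi 0, f u * cos (a * u) = (∫ u in Ioi 0, -f' u * sin (a * u)) / a := by
  have hsin (u : ℝ) : HasDerivAt (fun u => sin (a * u) / a) (cos (a * u)) u := by
    have h := ((hasDerivAt_id u).const_mul a).sin.div_const a
    simpa only [id_eq, mul_one, mul_div_cancel_right₀ _ ha] using h
  have hzero : Tendsto (fun u => f u * (sin (a * u) / a)) (𝓝[>] 0) (𝓝 0) := by
    have hcont : ContinuousAt (fun u => f u * (sin (a * u) / a)) 0 :=
      (hf.hasDerivAt 0 le_rfl).continuousAt.mul (hsin 0).continuousAt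
    simpa using hcont.tendsto.mono_left nhdsWithin_le_nhds
  have hinfty : Tendsto (fun u => f u * (sin (a * u) / a)) atTop (𝓝 0) := by
    refine hf.tendsto_zero.zero_mul_isBoundedUnder_le (isBoundedUnder_of ⟨1 / |a|, fun u => ?_⟩)
    rw [Function.comp_apply, norm_div, norm_eq_abs, norm_eq_abs]
    gcongr
    exact abs_sin_le_one _
  have hsin_int : IntegrableOn (fun u => f' u * (sin (a * u) / a)) (Ioi 0) := by
    simp only [← mul_div_assoc]
    exact (integrableOn_mul_sin hf.integrableOn_deriv a).div_const a
  rw [integral_Ioi_mul_deriv_eq_deriv_mul (fun u hu => hf.hasDerivAt u (le_of_lt hu))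
    (fun u _ => hsin u) (integrableOn_mul_cos hint a) hsin_int hzero hinfty, sub_zero, zero_sub,
    ← integral_neg, ← integral_div]
  simp only [neg_mul, neg_div, mul_div_assoc]

theorem integral_mul_cos_eq_integral_one_sub_cos (hf : IsConvexVanishing f f' 0)
    (hint : IntegrableOn f (Ioi 0)) {a : ℝ} (ha : a ≠ 0) :
    ∫ u in Ioi 0, f u * cos (a * u) =
      (∫ v in Ioi 0, (1 - cos (a * v)) ∂hf.derivStieltjes.measure) / a ^ 2 := by
  have hderiv : EqOn (fun u => -f' u * sin (a * u))
      (fun u => hf.derivStieltjes.measure.real (Ioi u) * sin (a * u)) (Ioi 0) := fun u hu => by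
    simp only [hf.derivStieltjes_measureReal_Ioi (le_of_lt hu)]
  have hsin_int := (integrableOn_mul_sin hf.integrableOn_deriv.neg a).congr_fun hderiv
    measurableSet_Ioi
  rw [hf.integral_mul_cos hint ha, setIntegral_congr_fun measurableSet_Ioi hderiv,
    integral_measureReal_Ioi_mul _ (by fun_prop) hsin_int]
  simp only [integral_sin_mul ha]
  rw [integral_div, div_div, sq]

theorem integral_mul_cos_mem_Ioc (hf : IsConvexVanishing f f' 0) (hint : IntegrableOn f (Ioi 0))
    {a : ℝ} (ha : a ≠ 0) : ∫ u in Ioi 0, f u * cos (a * u) ∈ Ioc 0 (2 * -f' 0 / a ^ 2) := by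
  let ν := hf.derivStieltjes.measure.restrict (Ioi 0)
  have hmass : ν.real univ = -f' 0 := by
    rw [measureReal_restrict_apply_univ, hf.derivStieltjes_measureReal_Ioi le_rfl]
  have hν : NeZero ν := ⟨fun h => by
    have := hf.deriv_neg le_rfl
    rw [h, measureReal_zero_apply] at hmass
    linarith⟩
  rw [hf.integral_mul_cos_eq_integral_one_sub_cos hint ha, ← hmass]
  have hpos := integral_one_sub_cos_mul_pos ν ha
  exact ⟨by positivity, by gcongr; exact integral_one_sub_cos_mul_le ν a⟩

theorem integral_mul_cos_add_cos_mem_Ioc (hf : IsConvexVanishing f f' 0)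
    (hint : IntegrableOn f (Ioi 0)) {a b : ℝ} (ha : a ≠ 0) (hb : b ≠ 0) :
    ∫ u in Ioi 0, f u * (cos (a * u) + cos (b * u)) ∈
      Ioc 0 (2 * -f' 0 * (1 / a ^ 2 + 1 / b ^ 2)) := by
  obtain ⟨ha_pos, ha_le⟩ := hf.integral_mul_cos_mem_Ioc hint ha
  obtain ⟨hb_pos, hb_le⟩ := hf.integral_mul_cos_mem_Ioc hint hb
  simp only [mul_add]
  rw [integral_add (integrableOn_mul_cos hint a) (integrableOn_mul_cos hint b), mul_one_div,
    mul_one_div]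
  exact ⟨add_pos ha_pos hb_pos, add_le_add ha_le hb_le⟩

theorem sum_range_neg_deriv_le (hf : IsConvexVanishing f f' c) (m : ℕ) :
    ∑ j ∈ Finset.range m, -f' (j + c) ≤ -f' c + f c := by
  have hc (j : ℕ) : c ≤ j + c := le_add_of_nonneg_left j.cast_nonneg
  have hstep (j : ℕ) : -f' ((j + 1 : ℕ) + c) ≤ f (j + c) - f ((j + 1 : ℕ) + c) := by
    simpa only [Nat.cast_succ, add_right_comm] using hf.neg_deriv_add_one_le (hc j)
  calc ∑ j ∈ Finset.range m, -f' (j + c)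
      ≤ ∑ j ∈ Finset.range (m + 1), -f' (j + c) :=
        Finset.sum_le_sum_of_subset_of_nonneg (Finset.range_subset_range.2 m.le_succ)
          fun j _ _ => neg_nonneg.2 (hf.deriv_neg (hc j)).le
    _ = ∑ j ∈ Finset.range m, -f' ((j + 1 : ℕ) + c) + -f' c := by
        rw [Finset.sum_range_succ', Nat.cast_zero, zero_add]
    _ ≤ ∑ j ∈ Finset.range m, (f (j + c) - f ((j + 1 : ℕ) + c)) + -f' c := by
        gcongr with j; exact hstep j
    _ = f c - f (m + c) + -f' c := by
        rw [Finset.sum_range_sub' fun j : ℕ => f (j + c), Nat.cast_zero, zero_add]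
    _ ≤ -f' c + f c := by linarith [hf.pos _ (hc m)]

theorem summable_neg_deriv (hf : IsConvexVanishing f f' c) : Summable fun j : ℕ => -f' (j + c) :=
  summable_of_sum_range_le
    (fun j => neg_nonneg.2 (hf.deriv_neg (le_add_of_nonneg_left j.cast_nonneg)).le)
    hf.sum_range_neg_deriv_le

theorem tsum_neg_deriv_le (hf : IsConvexVanishing f f' c) :
    ∑' j : ℕ, -f' (j + c) ≤ -f' c + f c :=
  hf.summable_neg_deriv.tsum_le_of_sum_range_le hf.sum_range_neg_deriv_le

end IsConvexVanishing

theorem hasSum_one_div_odd_sq : HasSum (fun k : ℕ => 1 / (2 * (k : ℝ) + 1) ^ 2) (π ^ 2 / 8) := by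
  have heven : HasSum (fun k : ℕ => 1 / ((2 * k : ℕ) : ℝ) ^ 2) (π ^ 2 / 6 / 4) := by
    refine (hasSum_zeta_two.div_const 4).congr_fun fun k => ?_
    push_cast
    ring
  have hodd : Summable fun k : ℕ => 1 / ((2 * k + 1 : ℕ) : ℝ) ^ 2 :=
    hasSum_zeta_two.summable.comp_injective (i := fun k : ℕ => 2 * k + 1) fun k l h => by lia
  have hsum := (heven.even_add_odd (f := fun k : ℕ => 1 / (k : ℝ) ^ 2) hodd.hasSum).unique
    hasSum_zeta_two
  have htsum : ∑' k : ℕ, 1 / ((2 * k + 1 : ℕ) : ℝ) ^ 2 = π ^ 2 / 8 := by linarith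
  simpa only [htsum, Nat.cast_add, Nat.cast_mul, Nat.cast_ofNat, Nat.cast_one] using
    hodd.hasSum_iff.2 htsum

theorem hasSum_one_div_odd_sq_add_one_div_odd_sq :
    HasSum (fun k : ℕ => 1 / (2 * (k : ℝ) + 1) ^ 2 + 1 / (2 * (k : ℝ) + 3) ^ 2)
      (π ^ 2 / 4 - 1) := by
  have htail : HasSum (fun k : ℕ => 1 / (2 * (k : ℝ) + 3) ^ 2) (π ^ 2 / 8 - 1) := by
    have h := (hasSum_nat_add_iff' 1).2 hasSum_one_div_odd_sq
    rw [Finset.sum_range_one, Nat.cast_zero, mul_zero, zero_add, one_pow, div_one] at h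
    refine h.congr_fun fun k => ?_
    rw [Nat.cast_succ, mul_add_one, add_assoc, two_add_one_eq_three]
  convert hasSum_one_div_odd_sq.add htail using 1
  ring

theorem one_div_sq_sub_add_one_div_sq_add_le {s t A : ℝ} (hts : |t| ≤ s) (hsA : s < A) :
    1 / (t - A) ^ 2 + 1 / (t + A) ^ 2 ≤ 1 / (s - A) ^ 2 + 1 / (s + A) ^ 2 := by
  have hclosed {r : ℝ} (hr : |r| ≤ s) :
      1 / (r - A) ^ 2 + 1 / (r + A) ^ 2 = 2 * (A ^ 2 + r ^ 2) / (A ^ 2 - r ^ 2) ^ 2 := by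
    obtain ⟨hr₁, hr₂⟩ := abs_le.1 hr
    have hsub : r - A ≠ 0 := by linarith
    have hadd : r + A ≠ 0 := by linarith
    rw [show A ^ 2 - r ^ 2 = -((r - A) * (r + A)) by ring]
    field_simp
    ring
  have hs : 0 ≤ s := (abs_nonneg t).trans hts
  have hsq : t ^ 2 ≤ s ^ 2 := sq_le_sq.2 (hts.trans (le_abs_self s))
  have hpos : 0 < A ^ 2 - s ^ 2 := sub_pos.2 (pow_lt_pow_left₀ hsA hs two_ne_zero)
  rw [hclosed hts, hclosed (abs_of_nonneg hs).le]
  gcongr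

theorem one_div_sq_sub_two_pi_mul_add_le {t : ℝ} (ht : t ∈ Icc (-π) π) (k : ℕ) :
    1 / (t - 2 * π * (k + 1)) ^ 2 + 1 / (t + 2 * π * (k + 1)) ^ 2 ≤
      1 / π ^ 2 * (1 / (2 * (k : ℝ) + 1) ^ 2 + 1 / (2 * (k : ℝ) + 3) ^ 2) := by
  have hlt : π < 2 * π * (k + 1) := by nlinarith [pi_pos, k.cast_nonneg (α := ℝ)]
  refine (one_div_sq_sub_add_one_div_sq_add_le (abs_le.2 ht) hlt).trans_eq ?_
  rw [show π - 2 * π * (k + 1) = -(π * (2 * k + 1)) by ring,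
    show π + 2 * π * (k + 1) = π * (2 * k + 3) by ring, neg_sq, mul_pow, mul_pow]
  field_simp

theorem tsum_tsum_mem_Ioc {ι κ : Type*} [Nonempty ι] [Nonempty κ] {F : ι → κ → ℝ} {c : ι → ℝ}
    {g : κ → ℝ} (hc : Summable c) (hg : Summable g) (hpos : ∀ i j, 0 < F i j)
    (hle : ∀ i j, F i j ≤ c i * g j) : ∑' i, ∑' j, F i j ∈ Ioc 0 ((∑' i, c i) * ∑' j, g j) := by
  have hF (i : ι) : Summable (F i) :=
    (hg.mul_left (c i)).of_nonneg_of_le (fun j => (hpos i j).le) (hle i)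
  have hrow_pos (i : ι) : 0 < ∑' j, F i j :=
    (hF i).tsum_pos (fun j => (hpos i j).le) (Classical.arbitrary κ) (hpos i _)
  have hrow_le (i : ι) : ∑' j, F i j ≤ c i * ∑' j, g j := by
    rw [← tsum_mul_left]
    exact (hF i).tsum_le_tsum (hle i) (hg.mul_left (c i))
  have hrows : Summable fun i => ∑' j, F i j :=
    (hc.mul_right _).of_nonneg_of_le (fun i => (hrow_pos i).le) hrow_le
  refine ⟨hrows.tsum_pos (fun i => (hrow_pos i).le) (Classical.arbitrary ι) (hrow_pos _), ?_⟩
  rw [← tsum_mul_right]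
  exact hrows.tsum_le_tsum hrow_le (hc.mul_right _)

theorem one_half_sub_two_div_pi_sq_le : 1 / 2 - 2 / π ^ 2 ≤ π / 4 - 1 / π := by
  have hfactor : π / 4 - 1 / π - (1 / 2 - 2 / π ^ 2) = (π - 2) ^ 2 * (π + 2) / (4 * π ^ 2) := by
    field_simp
    ring
  have hnonneg : 0 ≤ (π - 2) ^ 2 * (π + 2) / (4 * π ^ 2) := by positivity
  linarith

theorem IsConvexVanishing.mul_integral_mul_cos_add_cos_mem_Ioc {f f' : ℝ → ℝ} {x y t : ℝ}
    (hf : IsConvexVanishing f f' x) (hint : IntegrableOn f (Ioi x)) (hxy : x ≤ y)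
    (ht : t ∈ Icc (-π) π) (k : ℕ) :
    f y * ∫ u in Ioi 0, f (y + u) *
        (cos ((t - 2 * π * (k + 1)) * u) + cos ((t + 2 * π * (k + 1)) * u)) ∈
      Ioc 0 (2 / π ^ 2 * (1 / (2 * (k : ℝ) + 1) ^ 2 + 1 / (2 * (k : ℝ) + 3) ^ 2) *
        (f x * -f' y)) := by
  have hsub : t - 2 * π * (k + 1) ≠ 0 := by nlinarith [pi_pos, ht.2, k.cast_nonneg (α := ℝ)]
  have hadd : t + 2 * π * (k + 1) ≠ 0 := by nlinarith [pi_pos, ht.1, k.cast_nonneg (α := ℝ)]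
  have hfy := hf.mono hxy
  obtain ⟨hpos, hle⟩ := hfy.comp_const_add.integral_mul_cos_add_cos_mem_Ioc
    (integrableOn_Ioi_comp_const_add_iff.2 (hint.mono_set (Ioi_subset_Ioi hxy))) hsub hadd
  rw [add_zero] at hle
  have hderiv : 0 ≤ -f' y := neg_nonneg.2 (hfy.deriv_neg le_rfl).le
  refine ⟨mul_pos (hfy.pos y le_rfl) hpos, ?_⟩
  calc f y * ∫ u in Ioi 0, f (y + u) *
        (cos ((t - 2 * π * (k + 1)) * u) + cos ((t + 2 * π * (k + 1)) * u))
      ≤ f x * (2 * -f' y *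
          (1 / (t - 2 * π * (k + 1)) ^ 2 + 1 / (t + 2 * π * (k + 1)) ^ 2)) :=
        mul_le_mul (hf.antitoneOn self_mem_Ici hxy hxy) hle hpos.le (hf.pos x le_rfl).le
    _ ≤ f x * (2 * -f' y *
          (1 / π ^ 2 * (1 / (2 * (k : ℝ) + 1) ^ 2 + 1 / (2 * (k : ℝ) + 3) ^ 2))) := by
        have := (hf.pos x le_rfl).le
        gcongr
        exact one_div_sq_sub_two_pi_mul_add_le ht k
    _ = _ := by ring

theorem statement14_general {ψ ψ' : ℝ → ℝ} {x t : ℝ} (hψ : IsConvexVanishing ψ ψ' x)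
    (hint : IntegrableOn ψ (Ioi x)) (ht : t ∈ Icc (-π) π) :
    ∑' k : ℕ, ∑' j : ℕ, ψ (j + x) * ∫ u in Ioi 0, ψ (j + x + u) *
        (cos ((t - 2 * π * (k + 1)) * u) + cos ((t + 2 * π * (k + 1)) * u)) ∈
      Ioc 0 ((1 / 2 - 2 / π ^ 2) * ψ x * (|ψ' x| + ψ x)) := by
  have hterm (k j : ℕ) := hψ.mul_integral_mul_cos_add_cos_mem_Ioc hint
    (le_add_of_nonneg_left j.cast_nonneg) ht k
  have hweights := hasSum_one_div_odd_sq_add_one_div_odd_sq.mul_left (2 / π ^ 2)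
  have hconst : 2 / π ^ 2 * (π ^ 2 / 4 - 1) = 1 / 2 - 2 / π ^ 2 := by
    field_simp
    ring
  have hconst_nonneg : 0 ≤ 1 / 2 - 2 / π ^ 2 := by
    rw [← hconst, ← hweights.tsum_eq]
    exact tsum_nonneg fun k => by positivity
  obtain ⟨hpos, hle⟩ := tsum_tsum_mem_Ioc hweights.summable (hψ.summable_neg_deriv.mul_left (ψ x))
    (fun k j => (hterm k j).1) (fun k j => (hterm k j).2)
  refine ⟨hpos, hle.trans ?_⟩
  rw [hweights.tsum_eq, hconst, tsum_mul_left, ← mul_assoc, abs_of_neg (hψ.deriv_neg le_rfl)]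
  have := (hψ.pos x le_rfl).le
  gcongr
  exact hψ.tsum_neg_deriv_le

theorem statement14 (ψ ψ' : ℝ → ℝ)
    (hpos : ∀ t, 1 ≤ t → 0 < ψ t)
    (hcont : ContinuousOn ψ (Set.Ici (1 : ℝ)))
    (hconv : ConvexOn ℝ (Set.Ici (1 : ℝ)) ψ)
    (hderiv : ∀ t, 1 ≤ t → HasDerivAt ψ (ψ' t) t)
    (hlim : Tendsto ψ atTop (nhds 0))
    (hsum : Summable fun j : ℕ => ψ ((j : ℝ) + 1)) :
    ∀ t ∈ Set.Icc (-π) π, ∀ n : ℕ, 1 ≤ n →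
      0 < (∑' k : ℕ, ∑' j : ℕ, ψ ((j + n : ℕ) : ℝ) *
          ∫ u in Set.Ioi (0 : ℝ), ψ (((j + n : ℕ) : ℝ) + u) *
            (Real.cos ((t - 2 * π * ((k : ℝ) + 1)) * u) +
              Real.cos ((t + 2 * π * ((k : ℝ) + 1)) * u))) ∧
      (∑' k : ℕ, ∑' j : ℕ, ψ ((j + n : ℕ) : ℝ) *
          ∫ u in Set.Ioi (0 : ℝ), ψ (((j + n : ℕ) : ℝ) + u) *
            (Real.cos ((t - 2 * π * ((k : ℝ) + 1)) * u) +
              Real.cos ((t + 2 * π * ((k : ℝ) + 1)) * u))) ≤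
        (π / 4 - 1 / π) * ψ (n : ℝ) * (|ψ' (n : ℝ)| + ψ (n : ℝ)) := by
  intro t ht n hn
  have hn' : (1 : ℝ) ≤ n := mod_cast hn
  have hψ : IsConvexVanishing ψ ψ' 1 := ⟨hpos, hconv, hderiv, hlim⟩
  obtain ⟨hsum_pos, hsum_le⟩ := statement14_general (hψ.mono hn')
    ((hψ.integrableOn_of_summable hsum).mono_set (Ioi_subset_Ioi hn')) ht
  simp only [Nat.cast_add]
  refine ⟨hsum_pos, hsum_le.trans ?_⟩
  have := (hpos n hn').le
  gcongr ?_ * _ * _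
  exact one_half_sub_two_div_pi_sq_le
end

section
/- Let α>0, 0<r<1, 1≤p≤∞, and let p' satisfy 1/p+1/p'=1. Define 𝒫_{α,r,n}(t) = Σ_{k=0}^∞ e^{-α(k+n)^r} e^{ikt}. Then for every integer n ≥ n₂(α,r,p), one has ‖𝒫_{α,r,n}‖_{p'} = e^{-α n^r} n^{(1-r)/p} [ (2^{1/p'}/(αr)^{1/p}) J_{p'}(π n^{1-r}/(αr)) + Θ_n ( ((1−r)/(αr)^{1+1/p}) J_{p'}(π n^{1-r}/(αr)) n^{-r} + n^{-(1-r)/p} ) ], where |Θ_n| ≤ π² if 1≤p'<∞ and |Θ_n| ≤ 14/13 if p'=∞. -/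
open MeasureTheory Real Filter
open scoped ENNReal

/-- `n₂(α,r,p)`: the smallest positive integer `n` with
`(1/(αr)) n^{-r} + αr χ(p) n^{-(1-r)} ≤ 1/14`, where `χ(p)=p` for finite `p` and `χ(∞)=1`. -/
noncomputable def n₂ (α r : ℝ) (p : ℝ≥0∞) : ℕ :=
  sInf {n : ℕ | 0 < n ∧
    1 / (α * r) * (n : ℝ) ^ (-r) +
      α * r * (if p = ∞ then 1 else p.toReal) * (n : ℝ) ^ (-(1 - r)) ≤ 1 / 14}


/-- `𝒫_{α,r,n}(t) = Σ_{k=0}^∞ e^{-α(k+n)^r} e^{ikt}`. -/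
noncomputable def Pn (α r : ℝ) (n : ℕ) (t : ℝ) : ℂ :=
  ∑' k : ℕ, (Real.exp (-α * ((k + n : ℕ) : ℝ) ^ r) : ℂ) *
    Complex.exp (Complex.I * (k : ℂ) * (t : ℂ))

/-- `J_s(v) = ‖1/√(t²+1)‖_{L_s[0,v]}`. -/
noncomputable def Jfun (s : ℝ≥0∞) (v : ℝ) : ℝ :=
  (eLpNorm (fun t : ℝ => 1 / Real.sqrt (t ^ 2 + 1)) s (volume.restrict (Set.Ioc (0 : ℝ) v))).toReal

/-!
Factor out the first coefficient: `𝒫_{α,r,n} = e^{-α n^r} F` with `F = ∑ g_k e^{ikt}`, `g_0 = 1`.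
By concavity of `x^r` the ratios `g_{k+1} / g_k` are at least `q = e^{-L}`, where `L = α r n^{r-1}`,
so `(1 - q z) F - 1` has nonnegative coefficients and its modulus on the unit circle is at most its
value at `z = 1`. Summation by parts against the weights `(n + k)^{1-r}` bounds that value by
`d L ∑ g_k` with `d = (1 - r) / (α r) n^{-r}`, and gives `∑ g_k ≈ 1 / L`. Hence `|F(t)|` is
`1 / |1 - q e^{it}|`, and so `1 / √(t² + L²)`, up to a relative error `O(d)` and an absolute error
`O(1)`. Taking `L_{p'}` norms and rescaling `t` by `L` produces `J_{p'}(π / L)`; for `p' = ∞` the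
norm is exactly `∑ g_k`.
-/

theorem rpow_le_rpow_add_mul_sub {s x y : ℝ} (hs0 : 0 ≤ s) (hs1 : s ≤ 1) (hx : 0 < x)
    (hy : 0 ≤ y) : y ^ s ≤ x ^ s + s * x ^ (s - 1) * (y - x) := by
  have bernoulli := rpow_one_add_le_one_add_mul_self (s := y / x - 1)
    (by linarith [div_nonneg hy hx.le]) hs0 hs1
  rw [add_sub_cancel] at bernoulli
  calc y ^ s = x ^ s * (y / x) ^ s := by rw [← mul_rpow hx.le (by positivity)]; field_simp
    _ ≤ x ^ s * (1 + s * (y / x - 1)) := by gcongr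
    _ = x ^ s + s * x ^ (s - 1) * (y - x) := by rw [rpow_sub_one hx.ne']; field_simp

theorem mul_one_sub_exp_neg_le {θ : ℝ} (hθ0 : 0 ≤ θ) (hθ1 : θ ≤ 1) (x : ℝ) :
    θ * (1 - exp (-x)) ≤ 1 - exp (-(θ * x)) := by
  have convex := convexOn_exp.2 (Set.mem_univ (-x)) (Set.mem_univ 0) hθ0 (sub_nonneg.2 hθ1)
    (add_sub_cancel θ 1)
  simp only [smul_eq_mul, mul_zero, add_zero, exp_zero, mul_one, mul_neg] at convex
  linarith

theorem norm_exp_sub_one_le_norm {z : ℂ} (hz : z.re ≤ 0) : ‖Complex.exp z - 1‖ ≤ ‖z‖ := by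
  have mean_value := (convex_halfSpace_re_le 0).norm_image_sub_le_of_norm_hasDerivWithin_le
    (f := Complex.exp) (f' := Complex.exp) (C := 1) (x := 0) (y := z)
    (fun w _ ↦ (Complex.hasDerivAt_exp w).hasDerivWithinAt)
    (fun w hw ↦ by rw [Complex.norm_exp]; exact exp_le_one_iff.2 hw) (by simp) hz
  simpa using mean_value

theorem norm_exp_sub_one_sub_le_sq_div_two {z : ℂ} (hz : z.re ≤ 0) :
    ‖Complex.exp z - 1 - z‖ ≤ ‖z‖ ^ 2 / 2 := by
  have hderiv (s : ℝ) : HasDerivAt (fun s : ℝ ↦ Complex.exp (s * z) - 1 - s * z)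
      (Complex.exp (s * z) * z - z) s := by
    have linear : HasDerivAt (fun s : ℝ ↦ (s : ℂ) * z) z s := by
      simpa using (HasDerivAt.ofReal_comp (hasDerivAt_id s)).mul_const z
    exact (linear.cexp.sub_const 1).sub linear
  have hbound (s : ℝ) (hs : s ∈ Set.Ico (0 : ℝ) 1) :
      ‖Complex.exp (s * z) * z - z‖ ≤ ‖z‖ ^ 2 * s :=
    calc ‖Complex.exp (s * z) * z - z‖ = ‖Complex.exp (s * z) - 1‖ * ‖z‖ := by
          rw [← norm_mul, sub_one_mul]
      _ ≤ ‖s * z‖ * ‖z‖ := by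
          gcongr
          exact norm_exp_sub_one_le_norm (by simpa using mul_nonpos_of_nonneg_of_nonpos hs.1 hz)
      _ = ‖z‖ ^ 2 * s := by
          rw [norm_mul, Complex.norm_real, norm_of_nonneg hs.1]; ring
  have hquad (s : ℝ) : HasDerivAt (fun s ↦ ‖z‖ ^ 2 / 2 * s ^ 2) (‖z‖ ^ 2 * s) s :=
    ((hasDerivAt_pow 2 s).const_mul (‖z‖ ^ 2 / 2)).congr_deriv (by norm_num; ring)
  simpa using image_norm_le_of_norm_deriv_right_le_deriv_boundary
    (fun s _ ↦ (hderiv s).continuousAt.continuousWithinAt) (fun s _ ↦ (hderiv s).hasDerivWithinAt)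
    (by simp) hquad hbound (Set.right_mem_Icc.2 zero_le_one)

theorem sub_sq_div_two_le_one_sub_exp_neg {x : ℝ} (hx : 0 ≤ x) :
    x - x ^ 2 / 2 ≤ 1 - exp (-x) := by
  have taylor := norm_exp_sub_one_sub_le_sq_div_two (z := ((-x : ℝ) : ℂ)) (by simpa using hx)
  rw [← Complex.ofReal_exp] at taylor
  norm_cast at taylor
  rw [norm_neg, norm_eq_abs, norm_eq_abs, sq_abs] at taylor
  linarith [le_abs_self (exp (-x) - 1 - -x)]

theorem norm_one_sub_mul_exp_I_sq (q t : ℝ) :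
    ‖1 - (q : ℂ) * Complex.exp (Complex.I * t)‖ ^ 2 = (1 - q) ^ 2 + 2 * q * (1 - cos t) := by
  rw [mul_comm Complex.I, Complex.exp_mul_I, ← Complex.ofReal_cos, ← Complex.ofReal_sin,
    ← Complex.normSq_eq_norm_sq, Complex.normSq_apply]
  simp only [Complex.sub_re, Complex.sub_im, Complex.mul_re, Complex.mul_im, Complex.add_re,
    Complex.add_im, Complex.one_re, Complex.one_im, Complex.ofReal_re, Complex.ofReal_im,
    Complex.I_re, Complex.I_im]
  linear_combination q ^ 2 * sin_sq_add_cos_sq t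

/-- The modulus of the simple pole `1 / (L - i t)`, the profile of `∑ e^{-L k} e^{i k t}` near
`t = 0`. The function in `Jfun` is `poleProfile 1`. -/
noncomputable def poleProfile (L t : ℝ) : ℝ :=
  1 / √(t ^ 2 + L ^ 2)

section poleProfile

variable {L : ℝ}

theorem sqrt_sq_add_sq_pos (hL : 0 < L) (t : ℝ) : 0 < √(t ^ 2 + L ^ 2) := by
  positivity

theorem poleProfile_nonneg (L t : ℝ) : 0 ≤ poleProfile L t := by
  unfold poleProfile; positivity

theorem continuous_poleProfile (hL : 0 < L) : Continuous (poleProfile L) :=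
  continuous_const.div (by fun_prop) fun t ↦ (sqrt_sq_add_sq_pos hL t).ne'

theorem poleProfile_le_inv (hL : 0 < L) (t : ℝ) : poleProfile L t ≤ L⁻¹ := by
  rw [poleProfile, ← one_div]
  exact one_div_le_one_div_of_le hL (le_sqrt_of_sq_le (by nlinarith [sq_nonneg t]))

theorem poleProfile_zero_right (hL : 0 ≤ L) : poleProfile L 0 = L⁻¹ := by
  simp [poleProfile, sqrt_sq hL]

theorem poleProfile_abs (L t : ℝ) : poleProfile L |t| = poleProfile L t := by
  simp [poleProfile]

theorem poleProfile_eq_inv_mul (hL : 0 < L) (t : ℝ) :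
    poleProfile L t = L⁻¹ * poleProfile 1 (L⁻¹ * t) := by
  have hsqrt : √(t ^ 2 + L ^ 2) = L * √((L⁻¹ * t) ^ 2 + 1 ^ 2) := by
    rw [← sqrt_sq hL.le, ← sqrt_mul (by positivity), sqrt_sq hL.le]
    congr 1
    field_simp
  rw [poleProfile, poleProfile, hsqrt]
  field_simp

theorem exp_neg_mul_sqrt_le_norm_one_sub (hL : 0 ≤ L) {t : ℝ} (ht : |t| ≤ π) :
    2 / π * exp (-L) * √(t ^ 2 + L ^ 2) ≤
      ‖1 - (exp (-L) : ℂ) * Complex.exp (Complex.I * t)‖ := by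
  set q := exp (-L)
  have : 0 < q := exp_pos _
  have hq1 : q ≤ 1 := exp_le_one_iff.2 (neg_nonpos.2 hL)
  have hqL : q * L ≤ 1 - q := by
    have : q * (L + 1) ≤ q * exp L := by gcongr; exact add_one_le_exp L
    rw [← exp_add, neg_add_cancel, exp_zero] at this
    linarith
  have hcos : 2 / π ^ 2 * t ^ 2 ≤ 1 - cos t := by linarith [cos_le_one_sub_mul_cos_sq ht]
  have hpi : (2 / π) ^ 2 ≤ 1 :=
    pow_le_one₀ (by positivity) ((div_le_one pi_pos).2 two_le_pi)
  refine (pow_le_pow_iff_left₀ (by positivity) (norm_nonneg _) two_ne_zero).1 ?_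
  calc (2 / π * q * √(t ^ 2 + L ^ 2)) ^ 2
      = (2 / π) ^ 2 * (q * L) ^ 2 + (2 / π) ^ 2 * (q * q) * t ^ 2 := by
        rw [mul_pow, sq_sqrt (by positivity)]; ring
    _ ≤ 1 * (1 - q) ^ 2 + (2 / π) ^ 2 * (q * 1) * t ^ 2 := by gcongr
    _ = (1 - q) ^ 2 + 2 * q * (2 / π ^ 2 * t ^ 2) := by ring
    _ ≤ (1 - q) ^ 2 + 2 * q * (1 - cos t) := by gcongr
    _ = _ := (norm_one_sub_mul_exp_I_sq q t).symm

theorem norm_one_sub_exp_neg_mul_exp_I_pos (hL : 0 < L) {t : ℝ} (ht : |t| ≤ π) :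
    0 < ‖1 - (exp (-L) : ℂ) * Complex.exp (Complex.I * t)‖ :=
  lt_of_lt_of_le (by have := sqrt_sq_add_sq_pos hL t; positivity)
    (exp_neg_mul_sqrt_le_norm_one_sub hL.le ht)

-- The denominator is `1 - e^w` with `w = -L + i t`; the pole comes from its linearisation `-w`.
theorem abs_one_div_norm_one_sub_sub_poleProfile_le (hL : 0 < L) {t : ℝ} (ht : |t| ≤ π) :
    |1 / ‖1 - (exp (-L) : ℂ) * Complex.exp (Complex.I * t)‖ - poleProfile L t| ≤
      π / 4 * exp L := by
  set w : ℂ := -L + Complex.I * t with hw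
  have hre : w.re ≤ 0 := by simpa [hw] using hL.le
  have hexp : (exp (-L) : ℂ) * Complex.exp (Complex.I * t) = Complex.exp w := by
    rw [hw, Complex.exp_add]; push_cast; rfl
  have hnorm : ‖w‖ = √(t ^ 2 + L ^ 2) := by
    rw [Complex.norm_eq_sqrt_sq_add_sq]; simp [hw, add_comm]
  have hlow := exp_neg_mul_sqrt_le_norm_one_sub hL.le ht
  have hDpos := norm_one_sub_exp_neg_mul_exp_I_pos hL ht
  have hWpos := sqrt_sq_add_sq_pos hL t
  rw [hexp, norm_sub_rev] at hlow hDpos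
  rw [← hnorm] at hlow hWpos
  rw [poleProfile, hexp, norm_sub_rev, ← hnorm]
  set D := ‖Complex.exp w - 1‖
  have hDW : D ≤ ‖w‖ := norm_exp_sub_one_le_norm hre
  have hdiff : ‖w‖ - D ≤ ‖w‖ ^ 2 / 2 := by
    have := norm_sub_norm_le w (Complex.exp w - 1)
    rw [norm_sub_rev w] at this
    exact this.trans (norm_exp_sub_one_sub_le_sq_div_two hre)
  have hWD : ‖w‖ ≤ π / 2 * exp L * D := by
    calc ‖w‖ = π / 2 * exp L * (2 / π * exp (-L) * ‖w‖) := by rw [exp_neg]; field_simp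
      _ ≤ π / 2 * exp L * D := by gcongr
  rw [abs_of_nonneg (sub_nonneg.2 (one_div_le_one_div_of_le hDpos hDW)),
    div_sub_div _ _ hDpos.ne' hWpos.ne', div_le_iff₀ (by positivity)]
  calc 1 * ‖w‖ - D * 1 ≤ ‖w‖ * ‖w‖ / 2 := by linarith
    _ ≤ π / 2 * exp L * D * ‖w‖ / 2 := by gcongr
    _ = π / 4 * exp L * (D * ‖w‖) := by ring

end poleProfile

theorem pi_div_four_mul_exp_le_one {L : ℝ} (hL : L ≤ 1 / 14) : π / 4 * exp L ≤ 1 := by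
  have hexp : exp L ≤ 14 / 13 := (exp_le_exp.2 hL).trans
    ((exp_bound_div_one_sub_of_interval (by norm_num) (by norm_num)).trans (by norm_num))
  calc π / 4 * exp L ≤ 3.15 / 4 * (14 / 13) := by gcongr; exact pi_lt_d2.le
    _ ≤ 1 := by norm_num

theorem abs_norm_sub_le_of_norm_mul_sub_one_le {D F : ℂ} {W ε η : ℝ} (hD : D ≠ 0)
    (hDF : ‖D * F - 1‖ ≤ ε) (hDW : |1 / ‖D‖ - W| ≤ η) : |‖F‖ - W| ≤ (W + η) * ε + η := by
  have hFD : |‖F‖ - 1 / ‖D‖| ≤ 1 / ‖D‖ * ε :=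
    calc |‖F‖ - 1 / ‖D‖| = 1 / ‖D‖ * |‖D * F‖ - ‖(1 : ℂ)‖| := by
          rw [norm_mul, norm_one, ← abs_of_nonneg (one_div_nonneg.2 (norm_nonneg D)), ← abs_mul,
            abs_of_nonneg (one_div_nonneg.2 (norm_nonneg D))]
          congr 1
          field_simp
      _ ≤ 1 / ‖D‖ * ε := by gcongr; exact (abs_norm_sub_norm_le _ _).trans hDF
  have hε : 0 ≤ ε := (norm_nonneg _).trans hDF
  calc |‖F‖ - W| ≤ |‖F‖ - 1 / ‖D‖| + |1 / ‖D‖ - W| := abs_sub_le _ _ _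
    _ ≤ (W + η) * ε + η := by
        refine add_le_add (hFD.trans ?_) hDW
        gcongr
        linarith [(abs_le.1 hDW).2]

theorem sum_range_mul_sub_succ (w g : ℕ → ℝ) (N : ℕ) :
    ∑ k ∈ Finset.range N, w (k + 1) * (g k - g (k + 1)) =
      w 0 * g 0 - w N * g N + ∑ k ∈ Finset.range N, (w (k + 1) - w k) * g k := by
  have telescope := Finset.sum_range_sub (fun k ↦ w k * g k) N
  rw [← neg_sub (w N * g N), ← telescope, ← Finset.sum_neg_distrib, ← Finset.sum_add_distrib]
  exact Finset.sum_congr rfl fun k _ ↦ by ring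

section slowlyVaryingDecay

variable {g w : ℕ → ℝ} {δ v : ℝ}

theorem sub_mul_sum_range_le (hg : ∀ k, 0 ≤ g k) (hw : ∀ k, 0 ≤ w k)
    (hdrop : ∀ k, δ * g k ≤ w (k + 1) * (g k - g (k + 1))) (hstep : ∀ k, w (k + 1) - w k ≤ v)
    (N : ℕ) : (δ - v) * ∑ k ∈ Finset.range N, g k ≤ w 0 * g 0 := by
  have hsum : δ * ∑ k ∈ Finset.range N, g k ≤
      w 0 * g 0 - w N * g N + v * ∑ k ∈ Finset.range N, g k :=
    calc δ * ∑ k ∈ Finset.range N, g k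
        ≤ ∑ k ∈ Finset.range N, w (k + 1) * (g k - g (k + 1)) := by
          rw [Finset.mul_sum]; exact Finset.sum_le_sum fun k _ ↦ hdrop k
      _ = w 0 * g 0 - w N * g N + ∑ k ∈ Finset.range N, (w (k + 1) - w k) * g k :=
          sum_range_mul_sub_succ w g N
      _ ≤ w 0 * g 0 - w N * g N + v * ∑ k ∈ Finset.range N, g k := by
          rw [Finset.mul_sum]
          gcongr with k
          · exact hg k
          · exact hstep k
  linarith [mul_nonneg (hw N) (hg N)]

theorem summable_of_slowlyVaryingDecay (hg : ∀ k, 0 ≤ g k) (hw : ∀ k, 0 ≤ w k)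
    (hdrop : ∀ k, δ * g k ≤ w (k + 1) * (g k - g (k + 1))) (hstep : ∀ k, w (k + 1) - w k ≤ v)
    (hv : v < δ) : Summable g :=
  summable_of_sum_range_le hg fun N ↦
    (le_div_iff₀' (sub_pos.2 hv)).2 (sub_mul_sum_range_le hg hw hdrop hstep N)

theorem sub_mul_tsum_le (hg : ∀ k, 0 ≤ g k) (hw : ∀ k, 0 ≤ w k)
    (hdrop : ∀ k, δ * g k ≤ w (k + 1) * (g k - g (k + 1))) (hstep : ∀ k, w (k + 1) - w k ≤ v)
    (hv : v < δ) : (δ - v) * ∑' k, g k ≤ w 0 * g 0 := by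
  rw [← le_div_iff₀' (sub_pos.2 hv)]
  exact Real.tsum_le_of_sum_range_le hg fun N ↦
    (le_div_iff₀' (sub_pos.2 hv)).2 (sub_mul_sum_range_le hg hw hdrop hstep N)

end slowlyVaryingDecay

section powerSeries

variable {g : ℕ → ℝ} {q : ℝ} {z : ℂ}

theorem norm_ofReal_mul_pow_le (hg : ∀ k, 0 ≤ g k) (hz : ‖z‖ ≤ 1) (k : ℕ) :
    ‖(g k : ℂ) * z ^ k‖ ≤ g k := by
  rw [norm_mul, norm_pow, Complex.norm_real, norm_of_nonneg (hg k)]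
  exact mul_le_of_le_one_right (hg k) (pow_le_one₀ (norm_nonneg z) hz)

theorem one_sub_mul_tsum_sub_zero (hsum : Summable fun k ↦ (g k : ℂ) * z ^ k) :
    (1 - q * z) * ∑' k, (g k : ℂ) * z ^ k - g 0 =
      ∑' k, ((g (k + 1) - q * g k : ℝ) : ℂ) * z ^ (k + 1) := by
  have hterm (k : ℕ) : ((g (k + 1) - q * g k : ℝ) : ℂ) * z ^ (k + 1) =
      (g (k + 1) : ℂ) * z ^ (k + 1) - q * z * ((g k : ℂ) * z ^ k) := by
    push_cast; ring
  have hsum_succ : Summable fun k ↦ (g (k + 1) : ℂ) * z ^ (k + 1) := (summable_nat_add_iff 1).2 hsum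
  have hzero := hsum.tsum_eq_zero_add
  simp_rw [hterm]
  rw [hsum_succ.tsum_sub (hsum.mul_left _), tsum_mul_left]
  linear_combination (norm := (simp; ring)) hzero

theorem tsum_succ_sub_mul (hsum : Summable g) :
    ∑' k, (g (k + 1) - q * g k) = (1 - q) * ∑' k, g k - g 0 := by
  rw [((summable_nat_add_iff 1).2 hsum).tsum_sub (hsum.mul_left q), tsum_mul_left]
  linarith [hsum.tsum_eq_zero_add]

-- The coefficients of `(1 - q z) ∑ g k z ^ k - g 0` are nonnegative, so its modulus is largest at
-- `z = 1`.
theorem norm_one_sub_mul_tsum_sub_zero_le (hg : ∀ k, 0 ≤ g k) (hsum : Summable g)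
    (hq : ∀ k, q * g k ≤ g (k + 1)) (hz : ‖z‖ ≤ 1) :
    ‖(1 - q * z) * ∑' k, (g k : ℂ) * z ^ k - g 0‖ ≤ (1 - q) * ∑' k, g k - g 0 := by
  have hsum_diff : Summable fun k ↦ g (k + 1) - q * g k :=
    ((summable_nat_add_iff 1).2 hsum).sub (hsum.mul_left q)
  rw [one_sub_mul_tsum_sub_zero (.of_norm_bounded hsum (norm_ofReal_mul_pow_le hg hz)),
    ← tsum_succ_sub_mul hsum]
  refine tsum_of_norm_bounded hsum_diff.hasSum fun k ↦ ?_
  have hdiff : 0 ≤ g (k + 1) - q * g k := sub_nonneg.2 (hq k)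
  rw [norm_mul, norm_pow, Complex.norm_real, norm_of_nonneg hdiff]
  exact mul_le_of_le_one_right hdiff (pow_le_one₀ (norm_nonneg z) hz)

theorem le_one_sub_mul_tsum (hsum : Summable g) (hq : ∀ k, q * g k ≤ g (k + 1)) :
    g 0 ≤ (1 - q) * ∑' k, g k := by
  rw [← sub_nonneg, ← tsum_succ_sub_mul hsum]
  exact tsum_nonneg fun k ↦ sub_nonneg.2 (hq k)

theorem norm_tsum_mul_pow_le (hg : ∀ k, 0 ≤ g k) (hsum : Summable g) (hz : ‖z‖ ≤ 1) :
    ‖∑' k, (g k : ℂ) * z ^ k‖ ≤ ∑' k, g k :=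
  tsum_of_norm_bounded hsum.hasSum (norm_ofReal_mul_pow_le hg hz)

end powerSeries

/-- `α r x^{r-1}`, the slope of `α y^r` at `y = x`, i.e. the exponential rate at which
`e^{-α (x + k)^r}` initially decays in `k`. -/
noncomputable def decayRate (α r x : ℝ) : ℝ :=
  α * r * x ^ (r - 1)

/-- `(1 - r) / (α r) * x^{-r}`, the relative change of the decay rate over one decay length
`1 / decayRate α r x`. -/
noncomputable def decayDrift (α r x : ℝ) : ℝ :=
  (1 - r) / (α * r) * x ^ (-r)

/-- The coefficient `e^{-α (x + k)^r}` of `𝒫_{α,r,x}`, normalised to be `1` at `k = 0`. -/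
noncomputable def normalizedCoeff (α r x : ℝ) (k : ℕ) : ℝ :=
  exp (-(α * ((x + k) ^ r - x ^ r)))

/-- `e^{α x^r} 𝒫_{α,r,x}(t)`, the series with normalised coefficients. -/
noncomputable def normalizedSeries (α r x t : ℝ) : ℂ :=
  ∑' k, (normalizedCoeff α r x k : ℂ) * Complex.exp (Complex.I * t) ^ k

section coefficients

variable {α r x : ℝ}

theorem decayRate_pos (hα : 0 < α) (hr : 0 < r) (hx : 0 < x) : 0 < decayRate α r x := by
  unfold decayRate; positivity

theorem decayDrift_nonneg (hα : 0 < α) (hr0 : 0 < r) (hr1 : r ≤ 1) (hx : 0 < x) :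
    0 ≤ decayDrift α r x :=
  mul_nonneg (div_nonneg (sub_nonneg.2 hr1) (by positivity)) (by positivity)

theorem decayRate_mul_decayDrift (hα : 0 < α) (hr : 0 < r) (hx : 0 < x) :
    decayRate α r x * decayDrift α r x = (1 - r) / x := by
  rw [decayRate, decayDrift, rpow_sub_one hx.ne', rpow_neg hx.le]
  field_simp

theorem normalizedCoeff_pos (α r x : ℝ) (k : ℕ) : 0 < normalizedCoeff α r x k :=
  exp_pos _

theorem normalizedCoeff_zero (α r x : ℝ) : normalizedCoeff α r x 0 = 1 := by
  simp [normalizedCoeff]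

theorem normalizedCoeff_succ (α r x : ℝ) (k : ℕ) :
    normalizedCoeff α r x (k + 1) =
      exp (-(α * ((x + k + 1) ^ r - (x + k) ^ r))) * normalizedCoeff α r x k := by
  rw [normalizedCoeff, normalizedCoeff, ← exp_add]
  push_cast
  ring_nf

theorem mul_rpow_succ_sub_rpow_le_decayRate (hα : 0 ≤ α) (hr0 : 0 ≤ r) (hr1 : r ≤ 1) (hx : 0 < x)
    (k : ℕ) : α * ((x + k + 1) ^ r - (x + k) ^ r) ≤ decayRate α r x := by
  have tangent := rpow_le_rpow_add_mul_sub hr0 hr1 (by positivity : 0 < x + k)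
    (by positivity : 0 ≤ x + k + 1)
  have hmono : (x + k) ^ (r - 1) ≤ x ^ (r - 1) :=
    rpow_le_rpow_of_nonpos hx (by simp) (by linarith)
  calc α * ((x + k + 1) ^ r - (x + k) ^ r) ≤ α * (r * (x + k) ^ (r - 1)) := by gcongr; linarith
    _ ≤ α * (r * x ^ (r - 1)) := by gcongr
    _ = decayRate α r x := by rw [decayRate]; ring

theorem rpow_div_mul_decayRate_le (hα : 0 ≤ α) (hr0 : 0 ≤ r) (hr1 : r ≤ 1) (hx : 0 < x) (k : ℕ) :
    x ^ (1 - r) / (x + k + 1) ^ (1 - r) * decayRate α r x ≤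
      α * ((x + k + 1) ^ r - (x + k) ^ r) := by
  have tangent := rpow_le_rpow_add_mul_sub hr0 hr1 (by positivity : 0 < x + k + 1)
    (by positivity : 0 ≤ x + k)
  calc x ^ (1 - r) / (x + k + 1) ^ (1 - r) * decayRate α r x
      = α * (r * (x + k + 1) ^ (r - 1)) := by
        rw [decayRate, ← neg_sub 1 r, rpow_neg hx.le, rpow_neg (by positivity)]
        field_simp
    _ ≤ α * ((x + k + 1) ^ r - (x + k) ^ r) := by gcongr; linarith

theorem exp_neg_decayRate_mul_normalizedCoeff_le (hα : 0 ≤ α) (hr0 : 0 ≤ r) (hr1 : r ≤ 1)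
    (hx : 0 < x) (k : ℕ) :
    exp (-decayRate α r x) * normalizedCoeff α r x k ≤ normalizedCoeff α r x (k + 1) := by
  have := normalizedCoeff_pos α r x k
  rw [normalizedCoeff_succ]
  gcongr
  exact mul_rpow_succ_sub_rpow_le_decayRate hα hr0 hr1 hx k

theorem one_sub_exp_mul_normalizedCoeff_le (hα : 0 ≤ α) (hr0 : 0 ≤ r) (hr1 : r ≤ 1) (hx : 0 < x)
    (k : ℕ) :
    (1 - exp (-decayRate α r x)) * x ^ (1 - r) * normalizedCoeff α r x k ≤
      (x + k + 1) ^ (1 - r) * (normalizedCoeff α r x k - normalizedCoeff α r x (k + 1)) := by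
  set θ := x ^ (1 - r) / (x + k + 1) ^ (1 - r) with hθ
  have hθ0 : 0 ≤ θ := by positivity
  have hθ1 : θ ≤ 1 := div_le_one_of_le₀
    (rpow_le_rpow hx.le (by linarith [k.cast_nonneg (α := ℝ)]) (by linarith)) (by positivity)
  have hdrop : θ * (1 - exp (-decayRate α r x)) ≤
      1 - exp (-(α * ((x + k + 1) ^ r - (x + k) ^ r))) :=
    (mul_one_sub_exp_neg_le hθ0 hθ1 _).trans <| sub_le_sub_left
      (exp_le_exp.2 (neg_le_neg (rpow_div_mul_decayRate_le hα hr0 hr1 hx k))) 1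
  have := normalizedCoeff_pos α r x k
  calc (1 - exp (-decayRate α r x)) * x ^ (1 - r) * normalizedCoeff α r x k
      = (x + k + 1) ^ (1 - r) * (θ * (1 - exp (-decayRate α r x)) * normalizedCoeff α r x k) := by
        rw [hθ]; field_simp
    _ ≤ (x + k + 1) ^ (1 - r) *
        ((1 - exp (-(α * ((x + k + 1) ^ r - (x + k) ^ r)))) * normalizedCoeff α r x k) := by gcongr
    _ = _ := by rw [normalizedCoeff_succ]; ring

theorem rpow_succ_sub_rpow_le (hr0 : 0 ≤ r) (hr1 : r ≤ 1) (hx : 0 < x) (k : ℕ) :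
    (x + k + 1) ^ (1 - r) - (x + k) ^ (1 - r) ≤ (1 - r) / x * x ^ (1 - r) := by
  have slope := mul_rpow_succ_sub_rpow_le_decayRate zero_le_one (sub_nonneg.2 hr1)
    (sub_le_self 1 hr0) hx k
  rw [decayRate, rpow_sub_one hx.ne'] at slope
  convert slope using 1 <;> ring

theorem summable_normalizedCoeff_and_mul_tsum_le (hα : 0 ≤ α) (hr0 : 0 ≤ r) (hr1 : r ≤ 1)
    (hx : 0 < x) (hdrift : (1 - r) / x < 1 - exp (-decayRate α r x)) :
    Summable (normalizedCoeff α r x) ∧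
      (1 - exp (-decayRate α r x) - (1 - r) / x) * ∑' k, normalizedCoeff α r x k ≤ 1 := by
  have hxr : 0 < x ^ (1 - r) := by positivity
  have hnonneg (k : ℕ) : 0 ≤ normalizedCoeff α r x k := (normalizedCoeff_pos α r x k).le
  have hweight (k : ℕ) : 0 ≤ (x + k) ^ (1 - r) := by positivity
  have hdrop (k : ℕ) := one_sub_exp_mul_normalizedCoeff_le hα hr0 hr1 hx k
  have hstep (k : ℕ) := rpow_succ_sub_rpow_le hr0 hr1 hx k
  simp_rw [add_assoc, ← Nat.cast_succ] at hdrop hstep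
  have hlt := mul_lt_mul_of_pos_right hdrift hxr
  refine ⟨summable_of_slowlyVaryingDecay hnonneg hweight hdrop hstep hlt, ?_⟩
  have hbound := sub_mul_tsum_le hnonneg hweight hdrop hstep hlt
  rw [normalizedCoeff_zero, Nat.cast_zero, add_zero, ← sub_mul] at hbound
  refine le_of_mul_le_mul_left ?_ hxr
  linarith

end coefficients

section normalizedSeries

variable {α r x : ℝ}

theorem decayRate_mul_one_sub_le (hα : 0 < α) (hr0 : 0 < r) (hx : 0 < x) :
    decayRate α r x * (1 - decayRate α r x / 2 - decayDrift α r x) ≤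
      1 - exp (-decayRate α r x) - (1 - r) / x := by
  rw [← decayRate_mul_decayDrift hα hr0 hx]
  linarith [sub_sq_div_two_le_one_sub_exp_neg (decayRate_pos hα hr0 hx).le]

theorem div_lt_one_sub_exp_neg_decayRate (hα : 0 < α) (hr0 : 0 < r) (hx : 0 < x)
    (hLd : decayRate α r x / 2 + decayDrift α r x < 1) :
    (1 - r) / x < 1 - exp (-decayRate α r x) := by
  have := mul_pos (decayRate_pos hα hr0 hx) (by linarith :
    0 < 1 - decayRate α r x / 2 - decayDrift α r x)
  linarith [decayRate_mul_one_sub_le hα hr0 hx]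

theorem summable_normalizedCoeff (hα : 0 < α) (hr0 : 0 < r) (hr1 : r ≤ 1) (hx : 0 < x)
    (hLd : decayRate α r x / 2 + decayDrift α r x < 1) : Summable (normalizedCoeff α r x) :=
  (summable_normalizedCoeff_and_mul_tsum_le hα.le hr0.le hr1 hx
    (div_lt_one_sub_exp_neg_decayRate hα hr0 hx hLd)).1

theorem mul_tsum_normalizedCoeff_le_one (hα : 0 < α) (hr0 : 0 < r) (hr1 : r ≤ 1) (hx : 0 < x)
    (hLd : decayRate α r x / 2 + decayDrift α r x < 1) :
    (1 - decayRate α r x / 2 - decayDrift α r x) *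
      (decayRate α r x * ∑' k, normalizedCoeff α r x k) ≤ 1 := by
  have hsum_nonneg : 0 ≤ ∑' k, normalizedCoeff α r x k :=
    tsum_nonneg fun k ↦ (normalizedCoeff_pos α r x k).le
  have hle := mul_le_mul_of_nonneg_right (decayRate_mul_one_sub_le hα hr0 hx) hsum_nonneg
  have hone := (summable_normalizedCoeff_and_mul_tsum_le hα.le hr0.le hr1 hx
    (div_lt_one_sub_exp_neg_decayRate hα hr0 hx hLd)).2
  linarith

theorem inv_decayRate_le_tsum_normalizedCoeff (hα : 0 < α) (hr0 : 0 < r) (hr1 : r ≤ 1)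
    (hx : 0 < x) (hsum : Summable (normalizedCoeff α r x)) :
    (decayRate α r x)⁻¹ ≤ ∑' k, normalizedCoeff α r x k := by
  have hone := le_one_sub_mul_tsum hsum
    (exp_neg_decayRate_mul_normalizedCoeff_le hα.le hr0.le hr1 hx)
  rw [normalizedCoeff_zero] at hone
  rw [inv_le_iff_one_le_mul₀' (decayRate_pos hα hr0 hx)]
  refine hone.trans (mul_le_mul_of_nonneg_right ?_ ?_)
  · linarith [one_sub_le_exp_neg (decayRate α r x)]
  · exact tsum_nonneg fun k ↦ (normalizedCoeff_pos α r x k).le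

theorem norm_exp_I_mul_ofReal_le_one (t : ℝ) : ‖Complex.exp (Complex.I * t)‖ ≤ 1 :=
  (Complex.norm_exp_I_mul_ofReal t).le

theorem norm_normalizedSeries_le (hsum : Summable (normalizedCoeff α r x)) (t : ℝ) :
    ‖normalizedSeries α r x t‖ ≤ ∑' k, normalizedCoeff α r x k :=
  norm_tsum_mul_pow_le (fun k ↦ (normalizedCoeff_pos α r x k).le) hsum
    (norm_exp_I_mul_ofReal_le_one t)

theorem norm_normalizedSeries_zero (α r x : ℝ) :
    ‖normalizedSeries α r x 0‖ = ∑' k, normalizedCoeff α r x k := by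
  have hzero : normalizedSeries α r x 0 = ((∑' k, normalizedCoeff α r x k : ℝ) : ℂ) := by
    simp [normalizedSeries, Complex.ofReal_tsum]
  rw [hzero, Complex.norm_real]
  exact norm_of_nonneg (tsum_nonneg fun k ↦ (normalizedCoeff_pos α r x k).le)

theorem continuous_normalizedSeries (hsum : Summable (normalizedCoeff α r x)) :
    Continuous (normalizedSeries α r x) :=
  continuous_tsum (fun k ↦ by fun_prop) hsum fun k t ↦
    norm_ofReal_mul_pow_le (fun k ↦ (normalizedCoeff_pos α r x k).le)
      (norm_exp_I_mul_ofReal_le_one t) k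

theorem norm_one_sub_mul_normalizedSeries_sub_one_le (hα : 0 < α) (hr0 : 0 < r) (hr1 : r ≤ 1)
    (hx : 0 < x) (hLd : decayRate α r x / 2 + decayDrift α r x < 1) (t : ℝ) :
    ‖(1 - (exp (-decayRate α r x) : ℂ) * Complex.exp (Complex.I * t)) *
        normalizedSeries α r x t - 1‖ ≤
      decayDrift α r x * (decayRate α r x * ∑' k, normalizedCoeff α r x k) := by
  have hone := (summable_normalizedCoeff_and_mul_tsum_le hα.le hr0.le hr1 hx
    (div_lt_one_sub_exp_neg_decayRate hα hr0 hx hLd)).2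
  have hnorm := norm_one_sub_mul_tsum_sub_zero_le (fun k ↦ (normalizedCoeff_pos α r x k).le)
    (summable_normalizedCoeff hα hr0 hr1 hx hLd)
    (exp_neg_decayRate_mul_normalizedCoeff_le hα.le hr0.le hr1 hx)
    (norm_exp_I_mul_ofReal_le_one t)
  rw [normalizedCoeff_zero, Complex.ofReal_one] at hnorm
  rw [← decayRate_mul_decayDrift hα hr0 hx] at hone
  exact hnorm.trans (by linarith)

theorem abs_norm_normalizedSeries_sub_poleProfile_le (hα : 0 < α) (hr0 : 0 < r) (hr1 : r ≤ 1)
    (hx : 0 < x) (hL : decayRate α r x ≤ 1 / 14) (hd : decayDrift α r x ≤ 1 / 14) {t : ℝ}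
    (ht : |t| ≤ π) :
    |‖normalizedSeries α r x t‖ - poleProfile (decayRate α r x) t| ≤
      3 / 2 * decayDrift α r x * poleProfile (decayRate α r x) t + 3 / 2 := by
  have hL0 := decayRate_pos hα hr0 hx
  have hd0 := decayDrift_nonneg hα hr0 hr1 hx
  have hLd : decayRate α r x / 2 + decayDrift α r x < 1 := by linarith
  have hLS : decayRate α r x * ∑' k, normalizedCoeff α r x k ≤ 6 / 5 :=
    le_of_mul_le_mul_left ((mul_tsum_normalizedCoeff_le_one hα hr0 hr1 hx hLd).trans
      (by linarith)) (sub_pos.2 (by linarith : decayDrift α r x < 1 - decayRate α r x / 2))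
  have hE : _ ≤ decayDrift α r x * (6 / 5) :=
    (norm_one_sub_mul_normalizedSeries_sub_one_le hα hr0 hr1 hx hLd t).trans
      (mul_le_mul_of_nonneg_left hLS hd0)
  have hW := (abs_one_div_norm_one_sub_sub_poleProfile_le hL0 ht).trans
    (pi_div_four_mul_exp_le_one hL)
  refine (abs_norm_sub_le_of_norm_mul_sub_one_le
    (norm_pos_iff.1 (norm_one_sub_exp_neg_mul_exp_I_pos hL0 ht)) hE hW).trans ?_
  linarith [mul_nonneg hd0 (poleProfile_nonneg (decayRate α r x) t)]

theorem abs_tsum_normalizedCoeff_sub_inv_le (hα : 0 < α) (hr0 : 0 < r) (hr1 : r ≤ 1) (hx : 0 < x)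
    (hL : decayRate α r x ≤ 1 / 14) (hd : decayDrift α r x ≤ 1 / 14) :
    |∑' k, normalizedCoeff α r x k - (decayRate α r x)⁻¹| ≤
      14 / 13 * (decayDrift α r x * (decayRate α r x)⁻¹ + 1) := by
  have hL0 := decayRate_pos hα hr0 hx
  have hd0 := decayDrift_nonneg hα hr0 hr1 hx
  have hLd : decayRate α r x / 2 + decayDrift α r x < 1 := by linarith
  have hSL := mul_tsum_normalizedCoeff_le_one hα hr0 hr1 hx hLd
  rw [abs_of_nonneg (sub_nonneg.2 (inv_decayRate_le_tsum_normalizedCoeff hα hr0 hr1 hx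
    (summable_normalizedCoeff hα hr0 hr1 hx hLd)))]
  set L := decayRate α r x
  set d := decayDrift α r x
  set S := ∑' k, normalizedCoeff α r x k
  have hfactor : 1 ≤ (1 - L / 2 - d) * (1 + 14 / 13 * (d + L)) := by nlinarith
  have hLS : L * S ≤ 1 + 14 / 13 * (d + L) :=
    le_of_mul_le_mul_left (hSL.trans hfactor) (by linarith)
  calc S - L⁻¹ = (L * S - 1) * L⁻¹ := by field_simp
    _ ≤ 14 / 13 * (d + L) * L⁻¹ := by gcongr; linarith
    _ = 14 / 13 * (d * L⁻¹ + 1) := by field_simp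

end normalizedSeries

section Lp

variable {X E : Type*} [MeasurableSpace X] [NormedAddCommGroup E] {s : ℝ≥0∞}

theorem eLpNorm_top_eq_enorm_of_mem_support [TopologicalSpace X] {μ : Measure X} {f : X → E} {x : X}
    (hx : x ∈ μ.support) (hf : ContinuousAt f x) (hmax : ∀ y, ‖f y‖ ≤ ‖f x‖) :
    eLpNorm f ∞ μ = ‖f x‖ₑ := by
  rw [eLpNorm_exponent_top]
  refine le_antisymm
    (eLpNormEssSup_le_of_ae_enorm_bound (ae_of_all _ fun y ↦ enorm_le_iff_norm_le.2 (hmax y)))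
    (le_of_not_gt fun hlt ↦ ?_)
  have hnhds : {y | eLpNormEssSup f μ < ‖f y‖ₑ} ∈ nhds x := hf.enorm.eventually_const_lt hlt
  refine ((Measure.mem_support_iff_forall x).1 hx _ hnhds).ne' ?_
  simpa only [ae_iff, not_le] using (ae_le_eLpNormEssSup : ∀ᵐ y ∂μ, ‖f y‖ₑ ≤ eLpNormEssSup f μ)

theorem Icc_subset_support_restrict_Ioc {a b : ℝ} (hab : a < b) :
    Set.Icc a b ⊆ (volume.restrict (Set.Ioc a b)).support := by
  rw [← closure_Ioo hab.ne]
  refine closure_minimal ?_ Measure.isClosed_support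
  have := Measure.interior_inter_support (μ := (volume : Measure ℝ)) (s := Set.Ioc a b)
  rwa [interior_Ioc, Measure.support_eq_univ, Set.inter_univ] at this

theorem abs_lpNorm_sub_lpNorm_le {μ : Measure X} [IsFiniteMeasure μ] {f : X → E} {G : X → ℝ}
    {A B : ℝ} (hs : 1 ≤ s) (hs' : s ≠ ∞) (hf : MemLp f s μ) (hG : MemLp G s μ) (hA : 0 ≤ A)
    (hB : 0 ≤ B) (h : ∀ᵐ y ∂μ, |‖f y‖ - G y| ≤ A * G y + B) :
    |lpNorm f s μ - lpNorm G s μ| ≤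
      A * lpNorm G s μ + B * μ.real Set.univ ^ s.toReal⁻¹ := by
  have hconst : MemLp (fun _ : X ↦ B) s μ := memLp_const B
  have hAG : MemLp (A • G) s μ := hG.const_smul A
  have hdiff : lpNorm ((‖f ·‖) - G) s μ ≤ lpNorm (A • G + fun _ ↦ B) s μ := by
    rw [← toReal_eLpNorm (hf.norm.sub hG).1, ← toReal_eLpNorm (hAG.add hconst).1]
    exact ENNReal.toReal_mono (hAG.add hconst).2.ne (eLpNorm_mono_ae_real h)
  have hsum : lpNorm (A • G + fun _ ↦ B) s μ ≤
      A * lpNorm G s μ + B * μ.real Set.univ ^ s.toReal⁻¹ := by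
    refine (lpNorm_add_le hAG hs).trans_eq ?_
    rw [lpNorm_const_smul, lpNorm_const' (one_pos.trans_le hs).ne' hs', coe_nnnorm,
      norm_of_nonneg hA, norm_of_nonneg hB]
  rw [← lpNorm_norm hf.1]
  have hupper := lpNorm_le_lpNorm_add_lpNorm_sub' (f := (‖f ·‖)) hG hs
  have hlower := lpNorm_le_lpNorm_add_lpNorm_sub (f := G) hf.norm hs
  rw [abs_le]
  constructor <;> linarith

theorem map_abs_volume_restrict_Ioc {a : ℝ} (ha : 0 ≤ a) :
    (volume.restrict (Set.Ioc (-a) a)).map (|·|) = (2 : ℝ≥0∞) • volume.restrict (Set.Ioc 0 a) := by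
  have hpos : (volume.restrict (Set.Ioc 0 a)).map (|·|) = volume.restrict (Set.Ioc 0 a) := by
    conv_rhs => rw [← Measure.map_id (μ := volume.restrict (Set.Ioc 0 a))]
    exact Measure.map_congr ((ae_restrict_iff' measurableSet_Ioc).2
      (ae_of_all _ fun t ht ↦ abs_of_pos ht.1))
  have hneg : (volume.restrict (Set.Ioc (-a) 0)).map (|·|) = volume.restrict (Set.Ioc 0 a) := by
    have habs : (|·|) =ᵐ[volume.restrict (Set.Ioc (-a) 0)] (Neg.neg : ℝ → ℝ) :=
      (ae_restrict_iff' measurableSet_Ioc).2 (ae_of_all _ fun t ht ↦ abs_of_nonpos ht.2)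
    have hpre : Neg.neg ⁻¹' Set.Ico 0 a = Set.Ioc (-a) 0 := by simp
    rw [Measure.map_congr habs, ← hpre, ((Measure.measurePreserving_neg
      (volume : Measure ℝ)).restrict_preimage measurableSet_Ico).map_eq]
    exact Measure.restrict_congr_set Ico_ae_eq_Ioc
  rw [← Set.Ioc_union_Ioc_eq_Ioc (neg_nonpos.2 ha) ha,
    Measure.restrict_union (Set.Ioc_disjoint_Ioc_of_le le_rfl) measurableSet_Ioc,
    Measure.map_add _ _ (by fun_prop), hneg, hpos, two_smul]

theorem map_mul_volume_restrict_Ioc {c : ℝ} (hc : 0 < c) (a b : ℝ) :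
    (volume.restrict (Set.Ioc a b)).map (c * ·) =
      ENNReal.ofReal c⁻¹ • volume.restrict (Set.Ioc (c * a) (c * b)) := by
  have hpre : (c * ·) ⁻¹' Set.Ioc (c * a) (c * b) = Set.Ioc a b := by
    ext t
    simp only [Set.mem_preimage, Set.mem_Ioc, mul_lt_mul_iff_right₀ hc, mul_le_mul_iff_right₀ hc]
  rw [← hpre, ← Measure.restrict_map (by fun_prop) measurableSet_Ioc,
    Real.map_volume_mul_left hc.ne', Measure.restrict_smul, abs_of_pos (inv_pos.2 hc)]

theorem eLpNorm_comp_abs_restrict_Ioc {f : ℝ → E} (hf : StronglyMeasurable f) {a : ℝ} (ha : 0 ≤ a) :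
    eLpNorm (fun t ↦ f |t|) s (volume.restrict (Set.Ioc (-a) a)) =
      2 ^ (1 / s).toReal * eLpNorm f s (volume.restrict (Set.Ioc 0 a)) := by
  rw [← smul_eq_mul, ← eLpNorm_smul_measure_of_ne_zero two_ne_zero,
    ← map_abs_volume_restrict_Ioc ha]
  exact (eLpNorm_map_measure hf.aestronglyMeasurable (by fun_prop)).symm

theorem eLpNorm_comp_mul_restrict_Ioc {f : ℝ → E} (hf : StronglyMeasurable f) {c : ℝ} (hc : 0 < c)
    (a b : ℝ) :
    eLpNorm (fun t ↦ f (c * t)) s (volume.restrict (Set.Ioc a b)) =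
      ENNReal.ofReal c⁻¹ ^ (1 / s).toReal *
        eLpNorm f s (volume.restrict (Set.Ioc (c * a) (c * b))) := by
  rw [← smul_eq_mul, ← eLpNorm_smul_measure_of_ne_zero (by simpa using hc),
    ← map_mul_volume_restrict_Ioc hc]
  exact (eLpNorm_map_measure hf.aestronglyMeasurable (by fun_prop)).symm

end Lp

theorem Jfun_eq_toReal_eLpNorm_poleProfile (s : ℝ≥0∞) (v : ℝ) :
    Jfun s v = (eLpNorm (poleProfile 1) s (volume.restrict (Set.Ioc 0 v))).toReal := by
  unfold Jfun poleProfile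
  simp only [one_pow]

theorem toReal_eLpNorm_poleProfile {L : ℝ} (hL : 0 < L) {a : ℝ} (ha : 0 ≤ a) (s : ℝ≥0∞) :
    (eLpNorm (poleProfile L) s (volume.restrict (Set.Ioc (-a) a))).toReal =
      2 ^ (1 / s.toReal) * (L ^ (1 / s.toReal - 1) * Jfun s (a / L)) := by
  have hmeas {M : ℝ} (hM : 0 < M) := (continuous_poleProfile hM).stronglyMeasurable
  have hfold : eLpNorm (poleProfile L) s (volume.restrict (Set.Ioc (-a) a)) =
      2 ^ (1 / s).toReal * eLpNorm (poleProfile L) s (volume.restrict (Set.Ioc 0 a)) := by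
    simpa only [poleProfile_abs] using eLpNorm_comp_abs_restrict_Ioc (s := s) (hmeas hL) ha
  have hscale : poleProfile L = L⁻¹ • fun t ↦ poleProfile 1 (L⁻¹ * t) :=
    funext (poleProfile_eq_inv_mul hL)
  rw [hfold, hscale, eLpNorm_const_smul, eLpNorm_comp_mul_restrict_Ioc (hmeas one_pos)
    (inv_pos.2 hL), mul_zero, inv_mul_eq_div, Jfun_eq_toReal_eLpNorm_poleProfile,
    rpow_sub_one hL.ne']
  simp only [ENNReal.toReal_mul, ← ENNReal.toReal_rpow, ENNReal.toReal_ofNat, one_div,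
    ENNReal.toReal_inv, toReal_enorm, norm_inv, norm_of_nonneg hL.le, inv_inv,
    ENNReal.toReal_ofReal hL.le]
  ring

theorem Jfun_top {v : ℝ} (hv : 0 < v) : Jfun ∞ v = 1 := by
  have hone : poleProfile 1 0 = 1 := by simp [poleProfile_zero_right]
  have hsup : eLpNorm (poleProfile 1) ∞ (volume.restrict (Set.Ioc 0 v)) = ‖poleProfile 1 0‖ₑ := by
    refine eLpNorm_top_eq_enorm_of_mem_support
      (Icc_subset_support_restrict_Ioc hv (Set.left_mem_Icc.2 hv.le))
      (continuous_poleProfile one_pos).continuousAt fun t ↦ ?_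
    rw [norm_of_nonneg (poleProfile_nonneg 1 t), hone, norm_one]
    simpa using poleProfile_le_inv one_pos t
  rw [hone, enorm_one] at hsup
  rw [Jfun_eq_toReal_eLpNorm_poleProfile, hsup, ENNReal.toReal_one]

theorem memLp_poleProfile {L : ℝ} (hL : 0 < L) (s : ℝ≥0∞) (μ : Measure ℝ) [IsFiniteMeasure μ] :
    MemLp (poleProfile L) s μ :=
  .of_bound (continuous_poleProfile hL).aestronglyMeasurable L⁻¹ <| ae_of_all _ fun t ↦ by
    rw [norm_of_nonneg (poleProfile_nonneg L t)]
    exact poleProfile_le_inv hL t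

theorem Jfun_nonneg (s : ℝ≥0∞) (v : ℝ) : 0 ≤ Jfun s v :=
  ENNReal.toReal_nonneg

section kernelNorm

variable {α r x : ℝ} {s : ℝ≥0∞}

theorem memLp_normalizedSeries (hsum : Summable (normalizedCoeff α r x)) (s : ℝ≥0∞)
    (μ : Measure ℝ) [IsFiniteMeasure μ] : MemLp (normalizedSeries α r x) s μ :=
  .of_bound (continuous_normalizedSeries hsum).aestronglyMeasurable _
    (ae_of_all _ (norm_normalizedSeries_le hsum))

theorem abs_toReal_eLpNorm_top_normalizedSeries_sub_le (hα : 0 < α) (hr0 : 0 < r)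
    (hr1 : r ≤ 1) (hx : 0 < x) (hL : decayRate α r x ≤ 1 / 14) (hd : decayDrift α r x ≤ 1 / 14) :
    |(eLpNorm (normalizedSeries α r x) ∞ (volume.restrict (Set.Ioc (-π) π))).toReal -
        (decayRate α r x)⁻¹| ≤ 14 / 13 * (decayDrift α r x * (decayRate α r x)⁻¹ + 1) := by
  have hsum := summable_normalizedCoeff hα hr0 hr1 hx (by linarith)
  have hsup : eLpNorm (normalizedSeries α r x) ∞ (volume.restrict (Set.Ioc (-π) π)) =
      ‖normalizedSeries α r x 0‖ₑ := by
    refine eLpNorm_top_eq_enorm_of_mem_support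
      (Icc_subset_support_restrict_Ioc (by linarith [pi_pos]) (by simp [pi_pos.le]))
      (continuous_normalizedSeries hsum).continuousAt fun t ↦ ?_
    rw [norm_normalizedSeries_zero]
    exact norm_normalizedSeries_le hsum t
  rw [hsup, toReal_enorm, norm_normalizedSeries_zero]
  exact abs_tsum_normalizedCoeff_sub_inv_le hα hr0 hr1 hx hL hd

theorem abs_toReal_eLpNorm_normalizedSeries_sub_le (hα : 0 < α) (hr0 : 0 < r) (hr1 : r ≤ 1)
    (hx : 0 < x) (hL : decayRate α r x ≤ 1 / 14) (hd : decayDrift α r x ≤ 1 / 14)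
    (hs : 1 ≤ s) (hs' : s ≠ ∞) :
    |(eLpNorm (normalizedSeries α r x) s (volume.restrict (Set.Ioc (-π) π))).toReal -
        2 ^ (1 / s.toReal) *
          (decayRate α r x ^ (1 / s.toReal - 1) * Jfun s (π / decayRate α r x))| ≤
      π ^ 2 * (decayDrift α r x *
        (decayRate α r x ^ (1 / s.toReal - 1) * Jfun s (π / decayRate α r x)) + 1) := by
  have hL0 := decayRate_pos hα hr0 hx
  have hd0 := decayDrift_nonneg hα hr0 hr1 hx
  have hF := memLp_normalizedSeries (summable_normalizedCoeff hα hr0 hr1 hx (by linarith)) s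
    (volume.restrict (Set.Ioc (-π) π))
  have hG := memLp_poleProfile hL0 s (volume.restrict (Set.Ioc (-π) π))
  have hcmp := abs_lpNorm_sub_lpNorm_le hs hs' hF hG (by positivity) (by norm_num)
    ((ae_restrict_iff' measurableSet_Ioc).2 (ae_of_all _ fun t ht ↦
      abs_norm_normalizedSeries_sub_poleProfile_le hα hr0 hr1 hx hL hd (abs_le.2 ⟨ht.1.le, ht.2⟩)))
  rw [← toReal_eLpNorm hF.1, ← toReal_eLpNorm hG.1, toReal_eLpNorm_poleProfile hL0 pi_pos.le,
    measureReal_restrict_apply_univ, volume_real_Ioc_of_le (by linarith [pi_pos]),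
    sub_neg_eq_add, ← two_mul, ← one_div] at hcmp
  set Q := decayRate α r x ^ (1 / s.toReal - 1) * Jfun s (π / decayRate α r x)
  have hQ0 : 0 ≤ Q := mul_nonneg (by positivity) (Jfun_nonneg _ _)
  have hexponent : 1 / s.toReal ≤ 1 := by
    rw [one_div]
    exact inv_le_one_of_one_le₀ (by simpa using ENNReal.toReal_mono hs' hs)
  have hpi := pi_gt_three
  calc _ ≤ 3 / 2 * decayDrift α r x * (2 ^ (1 / s.toReal) * Q) +
        3 / 2 * (2 * π) ^ (1 / s.toReal) := hcmp
    _ ≤ 3 / 2 * decayDrift α r x * (2 * Q) + 3 / 2 * (2 * π) := by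
        gcongr <;> exact rpow_le_self_of_one_le (by linarith) hexponent
    _ = 3 * (decayDrift α r x * Q) + 3 * π := by ring
    _ ≤ π ^ 2 * (decayDrift α r x * Q) + π ^ 2 := by gcongr <;> nlinarith
    _ = π ^ 2 * (decayDrift α r x * Q + 1) := by ring

theorem Pn_eq_smul_normalizedSeries (α r : ℝ) (n : ℕ) :
    Pn α r n = exp (-α * (n : ℝ) ^ r) • normalizedSeries α r n := by
  funext t
  simp only [Pn, normalizedSeries, Pi.smul_apply]
  rw [← tsum_const_smul'']
  refine tsum_congr fun k ↦ ?_
  rw [Complex.real_smul, normalizedCoeff, ← Complex.exp_nat_mul, ← mul_assoc,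
    ← Complex.ofReal_mul, ← exp_add]
  congr 2
  · congr 2; push_cast; ring_nf
  · ring

theorem toReal_eLpNorm_Pn (α r : ℝ) (n : ℕ) (s : ℝ≥0∞) (μ : Measure ℝ) :
    (eLpNorm (Pn α r n) s μ).toReal =
      exp (-α * (n : ℝ) ^ r) * (eLpNorm (normalizedSeries α r n) s μ).toReal := by
  rw [Pn_eq_smul_normalizedSeries, eLpNorm_const_smul, ENNReal.toReal_mul, toReal_enorm,
    norm_of_nonneg (exp_pos _).le]

theorem exists_eq_add_mul_of_abs_sub_le {X M R C : ℝ} (hR : 0 < R) (h : |X - M| ≤ C * R) :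
    ∃ Θ : ℝ, |Θ| ≤ C ∧ X = M + Θ * R :=
  ⟨(X - M) / R, by rwa [abs_div, abs_of_pos hR, div_le_iff₀ hR], by field_simp; ring⟩

theorem exists_toReal_eLpNorm_normalizedSeries_eq (hα : 0 < α) (hr0 : 0 < r) (hr1 : r ≤ 1)
    (hx : 0 < x) (hL : decayRate α r x ≤ 1 / 14) (hd : decayDrift α r x ≤ 1 / 14) (hs : 1 ≤ s) :
    ∃ Θ : ℝ, (if s = ∞ then |Θ| ≤ 14 / 13 else |Θ| ≤ π ^ 2) ∧
      (eLpNorm (normalizedSeries α r x) s (volume.restrict (Set.Ioc (-π) π))).toReal =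
        2 ^ (1 / s.toReal) *
            (decayRate α r x ^ (1 / s.toReal - 1) * Jfun s (π / decayRate α r x)) +
          Θ * (decayDrift α r x *
            (decayRate α r x ^ (1 / s.toReal - 1) * Jfun s (π / decayRate α r x)) + 1) := by
  have hL0 := decayRate_pos hα hr0 hx
  have hd0 := decayDrift_nonneg hα hr0 hr1 hx
  have hJ := Jfun_nonneg s (π / decayRate α r x)
  split_ifs with hs'
  · refine exists_eq_add_mul_of_abs_sub_le (by positivity) ?_
    subst hs'
    simpa [Jfun_top (div_pos pi_pos hL0), rpow_neg_one] using
      abs_toReal_eLpNorm_top_normalizedSeries_sub_le hα hr0 hr1 hx hL hd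
  · exact exists_eq_add_mul_of_abs_sub_le (by positivity)
      (abs_toReal_eLpNorm_normalizedSeries_sub_le hα hr0 hr1 hx hL hd hs hs')

end kernelNorm

section parameters

variable {α r x : ℝ} {p p' : ℝ≥0∞}

theorem one_div_toReal_sub_one (h : 1 / p + 1 / p' = 1) :
    1 / p'.toReal - 1 = -(1 / p.toReal) := by
  have hp : 1 / p ≠ ∞ := ne_top_of_le_ne_top ENNReal.one_ne_top (le_self_add.trans h.le)
  have hp' : 1 / p' ≠ ∞ := ne_top_of_le_ne_top ENNReal.one_ne_top (le_add_self.trans h.le)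
  have := congrArg ENNReal.toReal h
  rw [ENNReal.toReal_add hp hp'] at this
  simp only [one_div, ENNReal.toReal_inv, ENNReal.toReal_one] at this ⊢
  linarith

theorem one_le_of_one_div_add_one_div (h : 1 / p + 1 / p' = 1) : 1 ≤ p' := by
  rw [← ENNReal.inv_le_one, ← one_div]
  exact le_add_self.trans h.le

theorem pi_mul_rpow_div_eq (hα : 0 < α) (hr : 0 < r) (hx : 0 < x) :
    π * x ^ (1 - r) / (α * r) = π / decayRate α r x := by
  rw [decayRate, ← neg_sub 1 r, rpow_neg hx.le]
  field_simp

theorem decayRate_rpow_neg (hα : 0 < α) (hr : 0 < r) (hx : 0 < x) (q : ℝ) :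
    decayRate α r x ^ (-(1 / q)) = x ^ ((1 - r) / q) / (α * r) ^ (1 / q) := by
  rw [decayRate, mul_rpow (by positivity) (by positivity), ← rpow_mul hx.le,
    rpow_neg (by positivity), show (r - 1) * -(1 / q) = (1 - r) / q by ring]
  field_simp

theorem n₂_spec (hr0 : 0 < r) (hr1 : r < 1) (α : ℝ) (p : ℝ≥0∞) :
    0 < n₂ α r p ∧ 1 / (α * r) * (n₂ α r p : ℝ) ^ (-r) +
      α * r * (if p = ∞ then 1 else p.toReal) * (n₂ α r p : ℝ) ^ (-(1 - r)) ≤ 1 / 14 := by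
  have hpow {e : ℝ} (he : 0 < e) : Tendsto (fun n : ℕ ↦ (n : ℝ) ^ (-e)) atTop (nhds 0) :=
    (tendsto_rpow_neg_atTop he).comp tendsto_natCast_atTop_atTop
  have hlim := ((hpow hr0).const_mul (1 / (α * r))).add
    ((hpow (sub_pos.2 hr1)).const_mul (α * r * (if p = ∞ then 1 else p.toReal)))
  rw [mul_zero, mul_zero, add_zero] at hlim
  exact Nat.sInf_mem
    ((eventually_gt_atTop 0).and (hlim.eventually_le_const (by norm_num))).exists

theorem pos_and_decay_le_of_n₂_le {n : ℕ} (hα : 0 < α) (hr0 : 0 < r) (hr1 : r < 1) (hp : 1 ≤ p)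
    (hn : n₂ α r p ≤ n) :
    0 < n ∧ decayRate α r n ≤ 1 / 14 ∧ decayDrift α r n ≤ 1 / 14 := by
  obtain ⟨hpos, hle⟩ := n₂_spec hr0 hr1 α p
  have hm : (0 : ℝ) < n₂ α r p := by exact_mod_cast hpos
  have hmn : (n₂ α r p : ℝ) ≤ n := by exact_mod_cast hn
  have hχ : 1 ≤ if p = ∞ then 1 else p.toReal := by
    split_ifs with htop
    · exact le_rfl
    · simpa using ENNReal.toReal_mono htop hp
  set χ := if p = ∞ then 1 else p.toReal
  have hrate : decayRate α r n ≤ α * r * χ * (n₂ α r p : ℝ) ^ (-(1 - r)) := by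
    rw [decayRate, ← neg_sub 1 r]
    refine mul_le_mul (le_mul_of_one_le_right (by positivity) hχ)
      (rpow_le_rpow_of_nonpos hm hmn (by linarith)) (by positivity) (by positivity)
  have hdrift : decayDrift α r n ≤ 1 / (α * r) * (n₂ α r p : ℝ) ^ (-r) := by
    rw [decayDrift]
    gcongr ?_ / _ * ?_
    · linarith
    · exact rpow_le_rpow_of_nonpos hm hmn (by linarith)
  have : 0 ≤ α * r * χ * (n₂ α r p : ℝ) ^ (-(1 - r)) := by positivity
  have : 0 ≤ 1 / (α * r) * (n₂ α r p : ℝ) ^ (-r) := by positivity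
  exact ⟨hpos.trans_le hn, by linarith, by linarith⟩

end parameters

theorem statement16_general (α r : ℝ) (p p' : ℝ≥0∞) (hα : 0 < α) (hr0 : 0 < r) (hr1 : r ≤ 1)
    (hpp' : 1 / p + 1 / p' = 1) (n : ℕ) (hn : 0 < n) (hL : decayRate α r n ≤ 1 / 14)
    (hd : decayDrift α r n ≤ 1 / 14) :
    ∃ Θ : ℝ, (if p' = ∞ then |Θ| ≤ 14 / 13 else |Θ| ≤ π ^ 2) ∧
      (eLpNorm (Pn α r n) p' (volume.restrict (Set.Ioc (-π) π))).toReal =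
        Real.exp (-α * (n : ℝ) ^ r) * (n : ℝ) ^ ((1 - r) / p.toReal) *
          ((2 : ℝ) ^ (1 / p'.toReal) / (α * r) ^ (1 / p.toReal) *
              Jfun p' (π * (n : ℝ) ^ (1 - r) / (α * r)) +
            Θ * ((1 - r) / (α * r) ^ ((1 : ℝ) + 1 / p.toReal) *
                  Jfun p' (π * (n : ℝ) ^ (1 - r) / (α * r)) * (n : ℝ) ^ (-r) +
                (n : ℝ) ^ (-((1 - r) / p.toReal)))) := by
  have hn' : (0 : ℝ) < n := by exact_mod_cast hn
  obtain ⟨Θ, hΘ, hnorm⟩ := exists_toReal_eLpNorm_normalizedSeries_eq hα hr0 hr1 hn' hL hd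
    (one_le_of_one_div_add_one_div hpp')
  refine ⟨Θ, hΘ, ?_⟩
  rw [toReal_eLpNorm_Pn, hnorm, one_div_toReal_sub_one hpp', decayRate_rpow_neg hα hr0 hn',
    pi_mul_rpow_div_eq hα hr0 hn', decayDrift, rpow_add (by positivity), rpow_one,
    rpow_neg hn'.le ((1 - r) / p.toReal)]
  field_simp

theorem statement16 (α r : ℝ) (p p' : ℝ≥0∞)
    (hα : 0 < α) (hr0 : 0 < r) (hr1 : r < 1) (hp : 1 ≤ p)
    (hpp' : 1 / p + 1 / p' = 1) :
    ∀ n : ℕ, n₂ α r p ≤ n →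
      ∃ Θ : ℝ, (if p' = ∞ then |Θ| ≤ 14 / 13 else |Θ| ≤ π ^ 2) ∧
        (eLpNorm (Pn α r n) p' (volume.restrict (Set.Ioc (-π) π))).toReal =
          Real.exp (-α * (n : ℝ) ^ r) * (n : ℝ) ^ ((1 - r) / p.toReal) *
            ((2 : ℝ) ^ (1 / p'.toReal) / (α * r) ^ (1 / p.toReal) *
                Jfun p' (π * (n : ℝ) ^ (1 - r) / (α * r)) +
              Θ * ((1 - r) / (α * r) ^ ((1 : ℝ) + 1 / p.toReal) *
                    Jfun p' (π * (n : ℝ) ^ (1 - r) / (α * r)) * (n : ℝ) ^ (-r) +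
                  (n : ℝ) ^ (-((1 - r) / p.toReal)))) := by
  intro n hn
  obtain ⟨hpos, hL, hd⟩ := pos_and_decay_le_of_n₂_le hα hr0 hr1 hp hn
  exact statement16_general α r p p' hα hr0 hr1.le hpp' n hpos hL hd
end

section
/- Let α>0, 0<r<1, 1≤p≤∞, and define 𝒫_{α,r,n}(t) = Σ_{k=0}^∞ e^{-α(k+n)^r} e^{ikt}. Then for every t with 0 < |t| ≤ π: (i) |𝒫_{α,r,n}(t)| ≤ (π/|t|) e^{-α n^r} for all n∈ℕ; and (ii) for every integer n ≥ n₂(α,r,p), |𝒫'_{α,r,n}(t)| ≤ (28π/(13|t|)) e^{-α n^r} n^{1-r}/(αr). -/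
open MeasureTheory Real Filter
open scoped ENNReal

/-!
Multiplying `∑ cₖ zᵏ` by `1 - z` replaces the coefficients by their increments (Abel summation).
For real summable `c` with `c₀ ≥ 0` the latter satisfy
`∑ |cₖ₊₁ - cₖ| = c₀ + 2 ∑ (cₖ₊₁ - cₖ)⁺`, and `|1 - e^{it}| ≥ 2|t|/π`, so
`|∑ cₖ e^{ikt}| ≤ (π/|t|) (c₀ + ∑ (cₖ₊₁ - cₖ)⁺)`.

With `aₖ = e^{-α(k+n)^r}` decreasing, `c = a` has no positive increments, while the increments of
`cₖ = k aₖ`, the coefficients of the derivative, are at most `aₖ₊₁`. The sum `∑ aₖ₊₁` is bounded by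
`G(n)` with `G(x) = x e^{-αx^r} / (αr x^r - 1)`, because `G' ≤ -e^{-αx^r}` where `αr x^r > 1`.
-/

section AbelTransformation

variable {𝕜 : Type*} [NormedField 𝕜]

lemma one_sub_mul_tsum_mul_pow {b : ℕ → 𝕜} {z : 𝕜} (hb : Summable fun k => b k * z ^ k) :
    (1 - z) * ∑' k, b k * z ^ k = b 0 + ∑' k, (b (k + 1) - b k) * z ^ (k + 1) := by
  have hshift : Summable fun k => b (k + 1) * z ^ (k + 1) :=
    (summable_nat_add_iff (f := fun k => b k * z ^ k) 1).2 hb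
  have hmul : z * ∑' k, b k * z ^ k = ∑' k, b k * z ^ (k + 1) := by
    rw [← tsum_mul_left]
    exact tsum_congr fun k => by ring
  have hmul_summable : Summable fun k => b k * z ^ (k + 1) :=
    (hb.mul_left z).congr fun k => by ring
  calc (1 - z) * ∑' k, b k * z ^ k
      = ∑' k, b k * z ^ k - ∑' k, b k * z ^ (k + 1) := by rw [sub_mul, one_mul, hmul]
    _ = b 0 + (∑' k, b (k + 1) * z ^ (k + 1) - ∑' k, b k * z ^ (k + 1)) := by
        rw [hb.tsum_eq_zero_add, pow_zero, mul_one, add_sub_assoc]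
    _ = b 0 + ∑' k, (b (k + 1) - b k) * z ^ (k + 1) := by
        rw [← hshift.tsum_sub hmul_summable]
        simp only [sub_mul]

lemma norm_one_sub_mul_norm_tsum_mul_pow_le [CompleteSpace 𝕜] {b : ℕ → 𝕜} {z : 𝕜}
    (hz : ‖z‖ ≤ 1) (hb : Summable fun k => ‖b k‖) :
    ‖1 - z‖ * ‖∑' k, b k * z ^ k‖ ≤ ‖b 0‖ + ∑' k, ‖b (k + 1) - b k‖ := by
  have norm_mul_pow_le (x : 𝕜) (k : ℕ) : ‖x * z ^ k‖ ≤ ‖x‖ := by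
    rw [norm_mul, norm_pow]
    exact mul_le_of_le_one_right (norm_nonneg x) (pow_le_one₀ (norm_nonneg z) hz)
  have hpow : Summable fun k => b k * z ^ k := hb.of_norm_bounded fun k => norm_mul_pow_le (b k) k
  have hshift : Summable fun k => ‖b (k + 1)‖ := (summable_nat_add_iff (f := fun k => ‖b k‖) 1).2 hb
  have hincr : Summable fun k => ‖b (k + 1) - b k‖ :=
    (hshift.add hb).of_nonneg_of_le (fun _ => norm_nonneg _) fun _ => norm_sub_le _ _
  calc ‖1 - z‖ * ‖∑' k, b k * z ^ k‖
      = ‖b 0 + ∑' k, (b (k + 1) - b k) * z ^ (k + 1)‖ := by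
        rw [← norm_mul, one_sub_mul_tsum_mul_pow hpow]
    _ ≤ ‖b 0‖ + ‖∑' k, (b (k + 1) - b k) * z ^ (k + 1)‖ := norm_add_le _ _
    _ ≤ ‖b 0‖ + ∑' k, ‖b (k + 1) - b k‖ := by
        gcongr
        exact tsum_of_norm_bounded hincr.hasSum fun k => norm_mul_pow_le _ (k + 1)

end AbelTransformation

lemma tsum_norm_succ_sub_le {c d : ℕ → ℝ} (hc : Summable c) (hd : Summable d)
    (hd_nonneg : ∀ k, 0 ≤ d k) (hcd : ∀ k, c (k + 1) - c k ≤ d k) :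
    ∑' k, ‖c (k + 1) - c k‖ ≤ c 0 + 2 * ∑' k, d k := by
  have hincr : HasSum (fun k => c (k + 1) - c k) (-c 0) := by
    simpa [hc.tsum_eq_zero_add] using ((summable_nat_add_iff 1).2 hc).hasSum.sub hc.hasSum
  have hmajorant : HasSum (fun k => 2 * d k - (c (k + 1) - c k)) (c 0 + 2 * ∑' k, d k) := by
    simpa [add_comm] using (hd.hasSum.mul_left 2).sub hincr
  refine hasSum_le (fun k => ?_) hincr.summable.norm.hasSum hmajorant
  rw [Real.norm_eq_abs, abs_le]
  constructor <;> linarith [hd_nonneg k, hcd k]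

lemma two_div_pi_mul_abs_le_norm_one_sub_exp {t : ℝ} (ht : |t| ≤ π) :
    2 / π * |t| ≤ ‖1 - Complex.exp (Complex.I * t)‖ := by
  have hhalf : |t / 2| = |t| / 2 := by rw [abs_div, abs_two]
  have hsin : 2 / π * |t / 2| ≤ |sin (t / 2)| := mul_abs_le_abs_sin (by linarith)
  rw [norm_sub_rev, Complex.norm_exp_I_mul_ofReal_sub_one, norm_mul, norm_two, norm_eq_abs]
  calc 2 / π * |t| = 2 * (2 / π * |t / 2|) := by rw [hhalf]; ring
    _ ≤ 2 * |sin (t / 2)| := by gcongr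

lemma norm_tsum_mul_exp_le {c d : ℕ → ℝ} {t : ℝ} (hc : Summable c) (hc_zero : 0 ≤ c 0)
    (hd : Summable d) (hd_nonneg : ∀ k, 0 ≤ d k) (hcd : ∀ k, c (k + 1) - c k ≤ d k)
    (ht_pos : 0 < |t|) (ht : |t| ≤ π) :
    ‖∑' k : ℕ, (c k : ℂ) * Complex.exp (Complex.I * k * t)‖ ≤ π / |t| * (c 0 + ∑' k, d k) := by
  set z := Complex.exp (Complex.I * t) with hz
  have hexp (k : ℕ) : Complex.exp (Complex.I * k * t) = z ^ k := by
    rw [hz, ← Complex.exp_nat_mul]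
    ring_nf
  simp only [hexp]
  have habel : ‖1 - z‖ * ‖∑' k, (c k : ℂ) * z ^ k‖ ≤ c 0 + ∑' k, ‖c (k + 1) - c k‖ := by
    simpa only [← Complex.ofReal_sub, Complex.norm_real, norm_of_nonneg hc_zero] using
      norm_one_sub_mul_norm_tsum_mul_pow_le (b := fun k => (c k : ℂ))
        (Complex.norm_exp_I_mul_ofReal t).le (by simpa using hc.norm)
  have hmul : 2 / π * |t| * ‖∑' k, (c k : ℂ) * z ^ k‖ ≤ 2 * (c 0 + ∑' k, d k) :=
    calc 2 / π * |t| * ‖∑' k, (c k : ℂ) * z ^ k‖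
        ≤ ‖1 - z‖ * ‖∑' k, (c k : ℂ) * z ^ k‖ := by
          gcongr
          exact two_div_pi_mul_abs_le_norm_one_sub_exp ht
      _ ≤ c 0 + (c 0 + 2 * ∑' k, d k) :=
          habel.trans (add_le_add_right (tsum_norm_succ_sub_le hc hd hd_nonneg hcd) _)
      _ = 2 * (c 0 + ∑' k, d k) := by ring
  have hpos : 0 < 2 / π * |t| := by positivity
  calc ‖∑' k, (c k : ℂ) * z ^ k‖
      ≤ 2 * (c 0 + ∑' k, d k) / (2 / π * |t|) := (le_div_iff₀' hpos).2 hmul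
    _ = π / |t| * (c 0 + ∑' k, d k) := by field_simp

lemma summable_of_natCast_mul {a : ℕ → ℝ} (ha : Summable fun k : ℕ => k * a k) : Summable a := by
  refine ha.norm.of_norm_bounded_eventually_nat ?_
  filter_upwards [eventually_ge_atTop 1] with k hk
  rw [norm_mul, RCLike.norm_natCast]
  exact le_mul_of_one_le_left (norm_nonneg _) (mod_cast hk)

lemma hasDerivAt_tsum_mul_exp {a : ℕ → ℝ} (ha : Summable fun k : ℕ => k * a k) (t : ℝ) :
    HasDerivAt (fun t : ℝ => ∑' k : ℕ, (a k : ℂ) * Complex.exp (Complex.I * k * t))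
      (Complex.I * ∑' k : ℕ, ((k * a k : ℝ) : ℂ) * Complex.exp (Complex.I * k * t)) t := by
  have hnorm (k : ℕ) (y : ℝ) : ‖Complex.exp (Complex.I * k * y)‖ = 1 := by
    simpa [mul_assoc] using Complex.norm_exp_I_mul_ofReal (k * y)
  rw [← tsum_mul_left]
  have hterm (k : ℕ) (y : ℝ) :
      HasDerivAt (fun y : ℝ => (a k : ℂ) * Complex.exp (Complex.I * k * y))
        (Complex.I * (((k * a k : ℝ) : ℂ) * Complex.exp (Complex.I * k * y))) y := by
    have hinner : HasDerivAt (fun y : ℝ => Complex.I * k * (y : ℂ)) (Complex.I * k) y := by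
      simpa using (hasDerivAt_id y).ofReal_comp.const_mul (Complex.I * k)
    refine (hinner.cexp.const_mul (a k : ℂ)).congr_deriv ?_
    push_cast
    ring
  refine hasDerivAt_tsum (y₀ := t) ha.norm hterm (fun k y => ?_) ?_ t
  · rw [norm_mul, norm_mul, Complex.norm_I, one_mul, hnorm, mul_one, Complex.norm_real]
  · refine .of_norm ((summable_of_natCast_mul ha).norm.congr fun k => ?_)
    rw [norm_mul, hnorm, mul_one, Complex.norm_real]

lemma tsum_add_one_le_of_hasDerivAt_le_neg {f G G' : ℝ → ℝ} {a : ℝ}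
    (hf : AntitoneOn f (Set.Ici a)) (hf_nonneg : ∀ x ≥ a, 0 ≤ f x) (hG_nonneg : ∀ x ≥ a, 0 ≤ G x)
    (hG : ∀ x ≥ a, HasDerivAt G (G' x) x) (hG' : ∀ x ≥ a, G' x ≤ -f x) :
    ∑' k : ℕ, f (a + k + 1) ≤ G a := by
  have hge (k : ℕ) : a ≤ a + k := le_add_of_nonneg_right k.cast_nonneg
  have hstep (x : ℝ) (hx : a ≤ x) : f (x + 1) ≤ G x - G (x + 1) := by
    obtain ⟨ξ, hξ, hslope⟩ := exists_hasDerivAt_eq_slope G G' (lt_add_one x)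
      (fun y hy => (hG y (hx.trans hy.1)).continuousAt.continuousWithinAt)
      (fun y hy => hG y (hx.trans hy.1.le))
    have haξ : a ≤ ξ := hx.trans hξ.1.le
    have hanti : f (x + 1) ≤ f ξ := hf haξ (haξ.trans hξ.2.le) hξ.2.le
    rw [add_sub_cancel_left, div_one] at hslope
    linarith [hG' ξ haξ]
  refine Real.tsum_le_of_sum_range_le (fun k => hf_nonneg _ (by linarith [hge k])) fun N => ?_
  calc ∑ k ∈ Finset.range N, f (a + k + 1)
      ≤ ∑ k ∈ Finset.range N, (G (a + k) - G (a + (k + 1 : ℕ))) := by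
        refine Finset.sum_le_sum fun k _ => ?_
        simpa only [Nat.cast_succ, add_assoc] using hstep (a + k) (hge k)
    _ = G a - G (a + N) := by
        rw [Finset.sum_range_sub' fun k : ℕ => G (a + k), Nat.cast_zero, add_zero]
    _ ≤ G a := sub_le_self _ (hG_nonneg _ (hge N))

section ExpNegRpow

variable {α r : ℝ}

lemma antitoneOn_exp_neg_mul_rpow (hα : 0 ≤ α) (hr : 0 ≤ r) :
    AntitoneOn (fun x : ℝ => exp (-α * x ^ r)) (Set.Ici 0) := fun x hx y _ hxy => by
  have hpow : x ^ r ≤ y ^ r := rpow_le_rpow hx hxy hr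
  exact exp_le_exp.2 (mul_le_mul_of_nonpos_left hpow (neg_nonpos.2 hα))

lemma summable_rpow_mul_exp_neg_mul_rpow (hα : 0 < α) (hr : 0 < r) (s : ℝ) :
    Summable fun m : ℕ => (m : ℝ) ^ s * exp (-α * (m : ℝ) ^ r) := by
  have hexp : (fun m : ℕ => exp (-α * (m : ℝ) ^ r)) =O[atTop]
      fun m : ℕ => ((m : ℝ) ^ r) ^ ((-2 - s) / r) :=
    ((isLittleO_exp_neg_mul_rpow_atTop hα _).comp_tendsto
      ((tendsto_rpow_atTop hr).comp tendsto_natCast_atTop_atTop)).isBigO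
  refine summable_of_isBigO_nat (summable_nat_rpow.2 (by norm_num : (-2 : ℝ) < -1))
    (((Asymptotics.isBigO_refl (fun m : ℕ => (m : ℝ) ^ s) atTop).mul hexp).congr' .rfl ?_)
  filter_upwards [eventually_gt_atTop 0] with m hm
  have hm_pos : (0 : ℝ) < m := mod_cast hm
  rw [← rpow_mul hm_pos.le, mul_div_cancel₀ _ hr.ne', ← rpow_add hm_pos, add_sub_cancel]

lemma summable_natCast_mul_exp_neg_mul_rpow (hα : 0 < α) (hr : 0 < r) (n : ℕ) :
    Summable fun k : ℕ => k * exp (-α * ((k + n : ℕ) : ℝ) ^ r) := by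
  have hshift : Summable fun k : ℕ => ((k + n : ℕ) : ℝ) * exp (-α * ((k + n : ℕ) : ℝ) ^ r) := by
    simpa only [rpow_one] using
      (summable_nat_add_iff n).2 (summable_rpow_mul_exp_neg_mul_rpow hα hr 1)
  refine hshift.of_nonneg_of_le (fun k => by positivity) fun k => ?_
  gcongr
  exact Nat.le_add_right k n

lemma exp_neg_mul_rpow_natCast_succ_le (hα : 0 ≤ α) (hr : 0 ≤ r) (n k : ℕ) :
    exp (-α * ((k + 1 + n : ℕ) : ℝ) ^ r) ≤ exp (-α * ((k + n : ℕ) : ℝ) ^ r) :=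
  antitoneOn_exp_neg_mul_rpow hα hr (Set.mem_Ici.2 (Nat.cast_nonneg _))
    (Set.mem_Ici.2 (Nat.cast_nonneg _)) (Nat.cast_le.2 (by lia))

lemma hasDerivAt_mul_exp_neg_mul_rpow_div {x : ℝ} (hx : 0 < x) (hne : α * r * x ^ r - 1 ≠ 0) :
    HasDerivAt (fun x => x * exp (-α * x ^ r) / (α * r * x ^ r - 1))
      (-(exp (-α * x ^ r) * (1 + α * r ^ 2 * x ^ r / (α * r * x ^ r - 1) ^ 2))) x := by
  have hpow : HasDerivAt (fun x : ℝ => x ^ r) (r * x ^ (r - 1)) x :=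
    hasDerivAt_rpow_const (.inl hx.ne')
  refine (((hasDerivAt_id x).mul (hpow.const_mul (-α)).exp).div
    ((hpow.const_mul (α * r)).sub_const 1) hne).congr_deriv ?_
  rw [rpow_sub_one hx.ne']
  simp only [id, Pi.mul_apply]
  generalize hd : α * r * x ^ r - 1 = d at hne ⊢
  field_simp
  rw [← hd]
  ring

lemma tsum_exp_neg_mul_rpow_le (hα : 0 < α) (hr : 0 < r) {x : ℝ} (hx : 0 < x)
    (hlarge : 1 < α * r * x ^ r) :
    ∑' k : ℕ, exp (-α * (x + k + 1) ^ r) ≤ x * exp (-α * x ^ r) / (α * r * x ^ r - 1) := by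
  have hdenom (y : ℝ) (hy : x ≤ y) : 0 < α * r * y ^ r - 1 := by
    have hmono : α * r * x ^ r ≤ α * r * y ^ r := by gcongr
    linarith
  have hpos (y : ℝ) (hy : x ≤ y) : 0 < y := hx.trans_le hy
  refine tsum_add_one_le_of_hasDerivAt_le_neg (f := fun y => exp (-α * y ^ r))
    (G := fun y => y * exp (-α * y ^ r) / (α * r * y ^ r - 1))
    ((antitoneOn_exp_neg_mul_rpow hα.le hr.le).mono (Set.Ici_subset_Ici.2 hx.le))
    (fun y _ => (exp_pos _).le)
    (fun y hy => div_nonneg (mul_nonneg (hpos y hy).le (exp_pos _).le) (hdenom y hy).le)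
    (fun y hy => hasDerivAt_mul_exp_neg_mul_rpow_div (hpos y hy) (hdenom y hy).ne')
    (fun y hy => neg_le_neg (le_mul_of_one_le_right (exp_pos _).le ?_))
  have hy_pos : 0 < y := hpos y hy
  exact le_add_of_nonneg_right (by positivity)

lemma pos_of_mul_rpow_pos {A x : ℝ} (hr : r ≠ 0) (hx : 0 ≤ x) (h : 0 < A * x ^ r) : 0 < x := by
  refine hx.lt_of_ne' fun hzero => h.ne' ?_
  rw [hzero, zero_rpow hr, mul_zero]

lemma norm_Pn_le (hα : 0 < α) (hr : 0 < r) {t : ℝ} (ht_pos : 0 < |t|) (ht : |t| ≤ π) (n : ℕ) :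
    ‖Pn α r n t‖ ≤ π / |t| * exp (-α * (n : ℝ) ^ r) := by
  have hbound := norm_tsum_mul_exp_le (d := 0)
    (summable_of_natCast_mul (summable_natCast_mul_exp_neg_mul_rpow hα hr n)) (exp_pos _).le
    summable_zero (fun _ => le_rfl)
    (fun k => sub_nonpos.2 (exp_neg_mul_rpow_natCast_succ_le hα.le hr.le n k)) ht_pos ht
  simpa only [Pn, Pi.zero_apply, tsum_zero, add_zero, zero_add] using hbound

lemma norm_deriv_Pn_le_tsum (hα : 0 < α) (hr : 0 < r) {t : ℝ} (ht_pos : 0 < |t|) (ht : |t| ≤ π)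
    (n : ℕ) :
    ‖deriv (Pn α r n) t‖ ≤ π / |t| * ∑' k : ℕ, exp (-α * ((k + 1 + n : ℕ) : ℝ) ^ r) := by
  have hsummable := summable_natCast_mul_exp_neg_mul_rpow hα hr n
  have hincr (k : ℕ) : ((k + 1 : ℕ) : ℝ) * exp (-α * ((k + 1 + n : ℕ) : ℝ) ^ r) -
      k * exp (-α * ((k + n : ℕ) : ℝ) ^ r) ≤ exp (-α * ((k + 1 + n : ℕ) : ℝ) ^ r) := by
    have hmul := mul_le_mul_of_nonneg_left (exp_neg_mul_rpow_natCast_succ_le hα.le hr.le n k)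
      (Nat.cast_nonneg' (α := ℝ) k)
    rw [Nat.cast_succ]
    linarith
  have hderiv : HasDerivAt (Pn α r n) _ t := hasDerivAt_tsum_mul_exp hsummable t
  rw [hderiv.deriv, norm_mul, Complex.norm_I, one_mul]
  simpa only [Nat.cast_zero, zero_mul, zero_add] using
    norm_tsum_mul_exp_le hsummable (by simp)
      ((summable_nat_add_iff 1).2 (summable_of_natCast_mul hsummable)) (fun _ => (exp_pos _).le)
      hincr ht_pos ht

lemma norm_deriv_Pn_le (hα : 0 < α) (hr : 0 < r) {t : ℝ} (ht_pos : 0 < |t|) (ht : |t| ≤ π)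
    {n : ℕ} (hn : 1 < α * r * (n : ℝ) ^ r) :
    ‖deriv (Pn α r n) t‖ ≤
      π / |t| * (n * exp (-α * (n : ℝ) ^ r) / (α * r * (n : ℝ) ^ r - 1)) := by
  have hn_pos : (0 : ℝ) < n :=
    pos_of_mul_rpow_pos hr.ne' n.cast_nonneg (zero_lt_one.trans hn)
  refine (norm_deriv_Pn_le_tsum hα hr ht_pos ht n).trans ?_
  gcongr
  calc ∑' k : ℕ, exp (-α * ((k + 1 + n : ℕ) : ℝ) ^ r)
      = ∑' k : ℕ, exp (-α * ((n : ℝ) + k + 1) ^ r) :=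
        tsum_congr fun k => by push_cast; ring_nf
    _ ≤ n * exp (-α * (n : ℝ) ^ r) / (α * r * (n : ℝ) ^ r - 1) :=
        tsum_exp_neg_mul_rpow_le hα hr hn_pos hn

lemma n₂_mem (hr0 : 0 < r) (hr1 : r < 1) (p : ℝ≥0∞) :
    0 < n₂ α r p ∧ 1 / (α * r) * (n₂ α r p : ℝ) ^ (-r) +
      α * r * (if p = ∞ then 1 else p.toReal) * (n₂ α r p : ℝ) ^ (-(1 - r)) ≤ 1 / 14 := by
  refine Nat.sInf_mem (s := {n : ℕ | 0 < n ∧ 1 / (α * r) * (n : ℝ) ^ (-r) +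
    α * r * (if p = ∞ then 1 else p.toReal) * (n : ℝ) ^ (-(1 - r)) ≤ 1 / 14}) ?_
  have hlim {s : ℝ} (hs : 0 < s) (C : ℝ) :
      Tendsto (fun n : ℕ => C * (n : ℝ) ^ (-s)) atTop (nhds 0) := by
    simpa using ((tendsto_rpow_neg_atTop hs).comp tendsto_natCast_atTop_atTop).const_mul C
  have hsmall := ((hlim hr0 (1 / (α * r))).add (hlim (sub_pos.2 hr1)
    (α * r * if p = ∞ then 1 else p.toReal))).eventually_le_const
    (by norm_num : (0 : ℝ) + 0 < 1 / 14)
  exact ((eventually_gt_atTop 0).and hsmall).exists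

lemma fourteen_le_of_n₂_le (hα : 0 < α) (hr0 : 0 < r) (hr1 : r < 1) {p : ℝ≥0∞} {n : ℕ}
    (hn : n₂ α r p ≤ n) : 14 ≤ α * r * (n : ℝ) ^ r := by
  obtain ⟨hm_pos, hm⟩ := n₂_mem (α := α) hr0 hr1 p
  set m := n₂ α r p
  have hm_pos' : (0 : ℝ) < m := mod_cast hm_pos
  have hχ : (0 : ℝ) ≤ if p = ∞ then 1 else p.toReal := by split_ifs <;> simp
  have hinv : (α * r * (m : ℝ) ^ r)⁻¹ ≤ 14⁻¹ := by
    have hsecond : 0 ≤ α * r * (if p = ∞ then 1 else p.toReal) * (m : ℝ) ^ (-(1 - r)) := by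
      positivity
    rw [rpow_neg hm_pos'.le r, one_div, ← mul_inv] at hm
    linarith
  calc 14 ≤ α * r * (m : ℝ) ^ r := (inv_le_inv₀ (by positivity) (by norm_num)).1 hinv
    _ ≤ α * r * (n : ℝ) ^ r := by gcongr

lemma div_mul_rpow_sub_one_le {A m x : ℝ} (hx : 0 < x) (hm : 1 < m)
    (hlarge : m ≤ A * x ^ r) :
    x / (A * x ^ r - 1) ≤ m / (m - 1) * (x ^ (1 - r) / A) := by
  have hsplit : x ^ (1 - r) / A = x / (A * x ^ r) := by
    rw [rpow_sub hx, rpow_one, div_div, mul_comm A]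
  rw [hsplit]
  generalize A * x ^ r = y at hlarge ⊢
  have hm' : 0 < m - 1 := sub_pos.2 hm
  have hy : 0 < y := by linarith
  have hy' : 0 < y - 1 := by linarith
  rw [div_mul_div_comm, div_le_div_iff₀ hy' (mul_pos hm' hy)]
  linarith [mul_le_mul_of_nonneg_left hlarge hx.le]

lemma pi_div_mul_le_of_n₂_le (hα : 0 < α) (hr0 : 0 < r) (hr1 : r < 1) {p : ℝ≥0∞} {n : ℕ}
    (hn : n₂ α r p ≤ n) (t : ℝ) :
    π / |t| * (n * exp (-α * (n : ℝ) ^ r) / (α * r * (n : ℝ) ^ r - 1)) ≤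
      28 * π / (13 * |t|) * exp (-α * (n : ℝ) ^ r) * (n : ℝ) ^ (1 - r) / (α * r) := by
  have hlarge := fourteen_le_of_n₂_le hα hr0 hr1 hn
  have hn_pos : (0 : ℝ) < n :=
    pos_of_mul_rpow_pos hr0.ne' n.cast_nonneg (lt_of_lt_of_le (by norm_num) hlarge)
  have hquot := div_mul_rpow_sub_one_le hn_pos (by norm_num) hlarge
  calc π / |t| * (n * exp (-α * (n : ℝ) ^ r) / (α * r * (n : ℝ) ^ r - 1))
      = π / |t| * exp (-α * (n : ℝ) ^ r) * (n / (α * r * (n : ℝ) ^ r - 1)) := by ring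
    _ ≤ π / |t| * exp (-α * (n : ℝ) ^ r) * (28 / 13 * ((n : ℝ) ^ (1 - r) / (α * r))) := by
        gcongr
        refine hquot.trans ?_
        gcongr <;> norm_num
    _ = 28 * π / (13 * |t|) * exp (-α * (n : ℝ) ^ r) * (n : ℝ) ^ (1 - r) / (α * r) := by
        ring

end ExpNegRpow

theorem statement18_general {α r t : ℝ} (hα : 0 < α) (hr : 0 < r) (ht_pos : 0 < |t|)
    (ht : |t| ≤ π) :
    (∀ n : ℕ, ‖Pn α r n t‖ ≤ π / |t| * exp (-α * (n : ℝ) ^ r)) ∧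
    (∀ n : ℕ, 1 < α * r * (n : ℝ) ^ r →
      ‖deriv (Pn α r n) t‖ ≤
        π / |t| * (n * exp (-α * (n : ℝ) ^ r) / (α * r * (n : ℝ) ^ r - 1))) :=
  ⟨norm_Pn_le hα hr ht_pos ht, fun _ => norm_deriv_Pn_le hα hr ht_pos ht⟩

theorem statement18 (α r : ℝ) (p : ℝ≥0∞)
    (hα : 0 < α) (hr0 : 0 < r) (hr1 : r < 1) (hp : 1 ≤ p) :
    ∀ t : ℝ, 0 < |t| → |t| ≤ π →
      (∀ n : ℕ, ‖Pn α r n t‖ ≤ π / |t| * Real.exp (-α * (n : ℝ) ^ r)) ∧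
      (∀ n : ℕ, n₂ α r p ≤ n →
        ‖deriv (Pn α r n) t‖ ≤
          28 * π / (13 * |t|) * Real.exp (-α * (n : ℝ) ^ r) * (n : ℝ) ^ (1 - r) / (α * r)) := by
  intro t ht_pos ht
  obtain ⟨hP, hP'⟩ := statement18_general hα hr0 ht_pos ht
  exact ⟨hP, fun n hn =>
    (hP' n (by linarith [fourteen_le_of_n₂_le hα hr0 hr1 hn])).trans
      (pi_div_mul_le_of_n₂_le hα hr0 hr1 hn t)⟩
end
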